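/- arXiv:1304.2254 — 12 statements merged into one kernel-verified Lean document; each statement's English description precedes it below -/
import Mathlib

section
/- Let q = 4 and let k ≥ 1 be an integer. Then the map g : F_{q^{3k}} → F_{q^{3k}} defined by g(x) = x + S_{2k}(x)^{q^{2k}} + S_{2k}(x)^{q^k + 3} is a bijection of F_{q^{3k}} (i.e., x + S_{2k}^{q^{2k}} + S_{2k}^{q^k+3} is a permutation polynomial of F_{4^{3k}}). -/
/-- `S2k q k x = x + x^q + x^(q^2) + ⋯ + x^(q^(2k-1))`. -/
def S2k (q k : ℕ) {F : Type*} [Field F] (x : F) : F :=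
  ∑ i ∈ Finset.range (2 * k), x ^ q ^ i

/-- For `q = 4` and `k ≥ 1`, the map
`x ↦ x + S_{2k}(x)^{q^{2k}} + S_{2k}(x)^{q^k+3}` is a bijection of `F_{q^{3k}}`. -/
theorem stmt_0 (k : ℕ) (hk : 0 < k)
    (F : Type*) [Field F] [Fintype F] (hF : Fintype.card F = 4 ^ (3 * k)) :
    Function.Bijective (fun x : F =>
      x + (S2k 4 k x) ^ 4 ^ (2 * k) + (S2k 4 k x) ^ (4 ^ k + 3)) := by
  have hc : CharP F 2 := by
    obtain ⟨p, hp⟩ := CharP.exists F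
    have hpp : p.Prime := (CharP.char_is_prime_or_zero F p).resolve_right
      (CharP.char_ne_zero_of_finite F p)
    obtain ⟨n, _, hn⟩ := FiniteField.card F p
    have h1 : p ∣ 2 := by
      have h2 : p ∣ 4 ^ (3 * k) := by
        rw [← hF, hn]; exact dvd_pow_self p n.pos.ne'
      have h3 : p ∣ 2 ^ 2 := by simpa using hpp.dvd_of_dvd_pow h2
      exact hpp.dvd_of_dvd_pow h3
    have : p = 2 := (Nat.prime_dvd_prime_iff_eq hpp Nat.prime_two).1 h1
    rwa [this] at hp
  have two : (2 : F) = 0 := CharTwo.two_eq_zero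
  have hfr : ∀ (n : ℕ) (x y : F), (x + y) ^ 4 ^ n = x ^ 4 ^ n + y ^ 4 ^ n := by
    intro n x y
    have : (4 : ℕ) ^ n = 2 ^ (2 * n) := by rw [pow_mul]; norm_num
    rw [this]; exact add_pow_char_pow ..
  have hfs : ∀ (n : ℕ) (s : Finset ℕ) (f : ℕ → F),
      (∑ i ∈ s, f i) ^ 4 ^ n = ∑ i ∈ s, f i ^ 4 ^ n := by
    intro n s f
    have : (4 : ℕ) ^ n = 2 ^ (2 * n) := by rw [pow_mul]; norm_num
    rw [this]; exact sum_pow_char_pow ..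
  have h3 : ∀ x : F, x ^ 4 ^ (3 * k) = x := by
    intro x; rw [← hF]; exact FiniteField.pow_card x
  -- the partial trace
  have hT : ∀ x : F, ∃ T : F, S2k 4 k x = T + T ^ 4 ^ k := by
    intro x
    refine ⟨∑ i ∈ Finset.range k, x ^ 4 ^ i, ?_⟩
    rw [hfs, S2k, two_mul, Finset.sum_range_add]
    congr 1
    refine Finset.sum_congr rfl fun i _ => ?_
    rw [← pow_mul, ← pow_add, add_comm]
  have hQ2 : ∀ x : F, x ^ 4 ^ (2 * k) = (x ^ 4 ^ k) ^ 4 ^ k := by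
    intro x; rw [← pow_mul, ← pow_add, two_mul]
  have hQ3 : ∀ x : F, ((x ^ 4 ^ k) ^ 4 ^ k) ^ 4 ^ k = x := by
    intro x
    conv_rhs => rw [← h3 x]
    rw [← pow_mul, ← pow_mul, ← pow_add, ← pow_add]; congr 2; ring
  have hS4 : ∀ x : F, x ^ 4 ^ (2 * k) + x = (S2k 4 k x) ^ 4 + S2k 4 k x := by
    intro x
    have h1 : (S2k 4 k x) ^ 4 = ∑ i ∈ Finset.range (2 * k), x ^ 4 ^ (i + 1) := by
      have := hfs 1 (Finset.range (2 * k)) (fun i => x ^ 4 ^ i)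
      rw [pow_one] at this
      rw [S2k, this]
      refine Finset.sum_congr rfl fun i _ => ?_
      rw [← pow_mul, ← pow_succ]
    have h2 := Finset.sum_range_succ (fun i => x ^ 4 ^ i) (2 * k)
    rw [Finset.sum_range_succ', ← h1] at h2
    simp only [pow_zero, pow_one] at h2
    change _ = S2k 4 k x + _ at h2
    linear_combination -h2 + (x - S2k 4 k x) * two
  have htr : ∀ x : F, ((S2k 4 k x) ^ 4 ^ k) ^ 4 ^ k = S2k 4 k x + (S2k 4 k x) ^ 4 ^ k := by
    intro x
    obtain ⟨T, h⟩ := hT x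
    rw [h]
    simp only [hfr, hQ3]
    linear_combination (-T ^ 4 ^ k) * two
  have key : ∀ x G : F, G = x + (S2k 4 k x) ^ 4 ^ (2 * k) + (S2k 4 k x) ^ (4 ^ k + 3) →
      G ^ 4 ^ (2 * k) + G = S2k 4 k x * ((S2k 4 k x) ^ 4 ^ k) ^ 2 *
        ((S2k 4 k x) ^ 4 ^ k) ^ 4 ^ k := by
    intro x G hG
    have hx := hS4 x
    have ht := htr x
    have hq := hQ3 (S2k 4 k x)
    rw [pow_add _ (4 ^ k) 3, hQ2] at hG
    have e : G ^ 4 ^ (2 * k) = x ^ 4 ^ (2 * k) + (S2k 4 k x) ^ 4 ^ k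
        + S2k 4 k x * (((S2k 4 k x) ^ 4 ^ k) ^ 4 ^ k) ^ 3 := by
      rw [hG, hfr, hfr, hQ2 (_ ^ _), hQ3, mul_pow, hQ2 (_ ^ _), hQ3, hQ2 (_ ^ 3),
        pow_right_comm _ 3, pow_right_comm _ 3]
    rw [e, hG, ht]
    rw [hQ2] at hx
    rw [hQ2]
    generalize S2k 4 k x ^ 4 ^ k = b at *
    generalize S2k 4 k x = a at *
    linear_combination hx + (a ^ 4 + a ^ 3 * b + a ^ 2 * b ^ 2 + a + b + a ^ 3 * b) * two
  refine (Finite.injective_iff_bijective).1 ?_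
  intro x y hxy
  have kx := key x _ rfl
  have ky := key y _ hxy
  rw [kx] at ky
  suffices hs : S2k 4 k x = S2k 4 k y by
    simp only [hs] at hxy
    exact add_right_cancel (add_right_cancel hxy)
  have qx := hQ3 (S2k 4 k x)
  have qy := hQ3 (S2k 4 k y)
  have k1 := congrArg (fun z => z ^ 4 ^ k) ky
  simp only [mul_pow, qx, qy, pow_right_comm _ 2] at k1
  have k2 := congrArg (fun z => z ^ 4 ^ k) k1
  simp only [mul_pow, qx, qy, pow_right_comm _ 2] at k2
  have zx : (S2k 4 k x) ^ 4 ^ k = 0 → S2k 4 k x = 0 := fun h => eq_zero_of_pow_eq_zero h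
  have zx2 : ((S2k 4 k x) ^ 4 ^ k) ^ 4 ^ k = 0 → S2k 4 k x = 0 :=
    fun h => zx (eq_zero_of_pow_eq_zero h)
  have zy : (S2k 4 k y) ^ 4 ^ k = 0 → S2k 4 k y = 0 := fun h => eq_zero_of_pow_eq_zero h
  have zy2 : ((S2k 4 k y) ^ 4 ^ k) ^ 4 ^ k = 0 → S2k 4 k y = 0 :=
    fun h => zy (eq_zero_of_pow_eq_zero h)
  clear kx key hxy htr hS4 hT qx qy
  generalize ((S2k 4 k x) ^ 4 ^ k) ^ 4 ^ k = c at *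
  generalize ((S2k 4 k y) ^ 4 ^ k) ^ 4 ^ k = c' at *
  generalize (S2k 4 k x) ^ 4 ^ k = b at *
  generalize (S2k 4 k y) ^ 4 ^ k = b' at *
  generalize S2k 4 k x = a at *
  generalize S2k 4 k y = a' at *
  have h4 : (a * b * c) ^ 4 = (a' * b' * c') ^ 4 := by
    calc (a * b * c) ^ 4 = (a * b ^ 2 * c) * (b * c ^ 2 * a) * (c * a ^ 2 * b) := by ring
      _ = (a' * b' ^ 2 * c') * (b' * c' ^ 2 * a') * (c' * a' ^ 2 * b') := by rw [ky, k1, k2]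
      _ = _ := by ring
  have hn : a * b * c = a' * b' * c' := by
    have h := hfr 1 (a * b * c) (a' * b' * c')
    rw [pow_one, h4] at h
    have h0 : (a * b * c + a' * b' * c') ^ 4 = 0 := by
      rw [h]; linear_combination ((a' * b' * c') ^ 4) * two
    have h5 := eq_zero_of_pow_eq_zero h0
    linear_combination h5 - (a' * b' * c') * two
  by_cases h0 : a * b * c = 0
  · have ha : a = 0 := by
      rcases mul_eq_zero.1 h0 with h | h
      · rcases mul_eq_zero.1 h with h | h
        · exact h
        · exact zx h
      · exact zx2 h
    have ha' : a' = 0 := by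
      rcases mul_eq_zero.1 (hn ▸ h0) with h | h
      · rcases mul_eq_zero.1 h with h | h
        · exact h
        · exact zy h
      · exact zy2 h
    rw [ha, ha']
  · apply mul_left_cancel₀ h0
    linear_combination k2 - a' * hn
end

section
/- Let q be a power of 2 and k ≥ 1 an integer. Let L : F_{q^{3k}} → F_{q^{3k}} be an additive (F_2-linear) map such that (i) L maps the subfield F_{q^k} bijectively onto itself, and (ii) L(x) + L(x)^{q^{2k}} = S_{2k}(x)^4 for all x ∈ F_{q^{3k}}. Then the map x ↦ L(x) + S_{2k}(x)^{q^k + 3} is a bijection of F_{q^{3k}}. -/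
/-- Let `q` be a power of 2, `k ≥ 1`, and `L : F_{q^{3k}} → F_{q^{3k}}` additive with
(i) `L` maps the subfield `F_{q^k}` bijectively onto itself, and
(ii) `L(x) + L(x)^{q^{2k}} = S_{2k}(x)^4` for all `x`.
Then `x ↦ L(x) + S_{2k}(x)^{q^k+3}` is a bijection of `F_{q^{3k}}`. -/
theorem stmt_1 (q e k : ℕ) (he : 0 < e) (hq : q = 2 ^ e) (hk : 0 < k)
    (F : Type*) [Field F] [Fintype F] (hF : Fintype.card F = q ^ (3 * k))
    (L : F → F) (hLadd : ∀ x y : F, L (x + y) = L x + L y)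
    (hLbij : Set.BijOn L {x : F | x ^ q ^ k = x} {x : F | x ^ q ^ k = x})
    (hLid : ∀ x : F, L x + (L x) ^ q ^ (2 * k) = (S2k q k x) ^ 4) :
    Function.Bijective (fun x : F => L x + (S2k q k x) ^ (q ^ k + 3)) := by
  have hchar : CharP F 2 := by
    have : Fact (Nat.Prime 2) := ⟨Nat.prime_two⟩
    refine charP_of_card_eq_prime_pow (p := 2) (f := e * (3 * k)) ?_
    rw [hF, hq, pow_mul 2 e (3 * k)]
  have : ExpChar F 2 := ExpChar.prime Nat.prime_two
  have h2 : (2 : F) = 0 := CharTwo.two_eq_zero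
  obtain ⟨ψ, hψ⟩ : ∃ ψ : F →+* F, ∀ x, ψ x = x ^ q :=
    ⟨iterateFrobenius F 2 e, fun x => by rw [iterateFrobenius_def, hq]⟩
  obtain ⟨φ, hφ⟩ : ∃ φ : F →+* F, ∀ x, φ x = x ^ q ^ k :=
    ⟨iterateFrobenius F 2 (e * k), fun x => by rw [iterateFrobenius_def, hq, pow_mul]⟩
  have hφ2 : ∀ x : F, x ^ q ^ (2 * k) = φ (φ x) := fun x => by
    rw [hφ, hφ, ← pow_mul, ← pow_add, two_mul]
  have hφ3 : ∀ x : F, φ (φ (φ x)) = x := fun x => by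
    rw [← hφ2, hφ, ← pow_mul, ← pow_add]
    have := FiniteField.pow_card x
    rw [hF] at this
    convert this using 3
    ring
  have hS : ∀ x : F, S2k q k x = (∑ i ∈ Finset.range k, x ^ q ^ i)
      + φ (∑ i ∈ Finset.range k, x ^ q ^ i) := fun x => by
    unfold S2k
    rw [two_mul, Finset.sum_range_add, map_sum]
    congr 1
    refine Finset.sum_congr rfl fun i _ => ?_
    rw [hφ, ← pow_mul, ← pow_add, add_comm]
  have hS0 : ∀ x : F, φ (φ (S2k q k x)) = S2k q k x + φ (S2k q k x) := fun x => by
    rw [hS]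
    simp only [map_add, hφ3]
    linear_combination (-φ (∑ i ∈ Finset.range k, x ^ q ^ i)) * h2
  have hSadd : ∀ x y : F, S2k q k (x + y) = S2k q k x + S2k q k y := fun x y => by
    unfold S2k
    rw [← Finset.sum_add_distrib]
    refine Finset.sum_congr rfl fun i _ => ?_
    rw [hq, ← pow_mul, add_pow_expChar_pow]
  have hSq : ∀ x : F, ψ (S2k q k x) + x = S2k q k x + φ (φ x) := fun x => by
    rw [← hφ2]
    unfold S2k
    rw [← Finset.sum_range_succ, Finset.sum_range_succ', map_sum]
    congr 1
    · refine Finset.sum_congr rfl fun i _ => ?_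
      rw [hψ, ← pow_mul, ← pow_succ]
    · simp
  have key : ∀ x : F, (fun x : F => L x + (S2k q k x) ^ (q ^ k + 3)) x
      + φ (φ ((fun x : F => L x + (S2k q k x) ^ (q ^ k + 3)) x))
      = φ (S2k q k x) * (S2k q k x * φ (S2k q k x) * (S2k q k x + φ (S2k q k x))) := fun x => by
    have h1 := hLid x
    rw [hφ2] at h1
    simp only [pow_add, ← hφ, map_add, map_mul, map_pow, hS0]
    generalize S2k q k x = a at *
    generalize φ a = b at *
    linear_combination h1 + (a ^ 4 + 3 * a ^ 3 * b + 4 * a ^ 2 * b ^ 2 + 3 * a * b ^ 3 + b ^ 4) * h2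
  have h4 : ∀ a b : F, a ^ 4 = b ^ 4 → a = b := fun a b h => by
    have : (a - b) ^ 4 = 0 := by
      linear_combination h + (b ^ 4 - 2 * a ^ 3 * b + 3 * a ^ 2 * b ^ 2 - 2 * a * b ^ 3) * h2
    exact sub_eq_zero.1 (pow_eq_zero_iff (by norm_num) |>.1 this)
  refine Finite.injective_iff_bijective.1 fun x y hxy => ?_
  have hg : φ (S2k q k x) * (S2k q k x * φ (S2k q k x) * (S2k q k x + φ (S2k q k x)))
      = φ (S2k q k y) * (S2k q k y * φ (S2k q k y) * (S2k q k y + φ (S2k q k y))) := by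
    rw [← key, ← key]; simp only [hxy]
  have hs : S2k q k x = S2k q k y := by
    have ha := hS0 x
    have hb := hS0 y
    have ha3 := hφ3 (S2k q k x)
    have hb3 := hφ3 (S2k q k y)
    generalize S2k q k x = a at *
    generalize S2k q k y = b at *
    rw [← ha, ← hb] at hg
    have g1 := congrArg φ hg
    have g2 := congrArg φ g1
    simp only [map_mul, ha3, hb3] at g1 g2
    have hN : a * φ a * φ (φ a) = b * φ b * φ (φ b) := by
      apply h4
      calc (a * φ a * φ (φ a)) ^ 4 = (φ a * (a * φ a * φ (φ a))) *
            (φ (φ a) * (φ a * φ (φ a) * a)) * (a * (φ (φ a) * a * φ a)) := by ring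
        _ = (φ b * (b * φ b * φ (φ b))) *
            (φ (φ b) * (φ b * φ (φ b) * b)) * (b * (φ (φ b) * b * φ b)) := by rw [hg, g1, g2]
        _ = (b * φ b * φ (φ b)) ^ 4 := by ring
    by_cases h0 : a * φ a * φ (φ a) = 0
    · have h0' := h0
      rw [hN] at h0'
      simp only [mul_eq_zero, map_eq_zero, or_self] at h0 h0'
      rw [h0, h0']
    · refine mul_right_cancel₀ h0 ?_
      linear_combination g2 - b * hN
  have hLxy : L x = L y := by
    simp only [hs] at hxy
    exact add_right_cancel hxy
  have hz : S2k q k (x + y) = 0 := by rw [hSadd, hs, CharTwo.add_self_eq_zero]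
  have hzL : L (x + y) = 0 := by rw [hLadd, hLxy, CharTwo.add_self_eq_zero]
  have hL0 : L 0 = 0 := by simpa using hLadd 0 0
  have hz2 := hSq (x + y)
  rw [hz, map_zero, zero_add, zero_add] at hz2
  have hz1 : (x + y) ^ q ^ k = x + y := by
    have := hφ3 (x + y)
    rwa [← hz2, hφ] at this
  have h0 : φ (0:F) = 0 := map_zero φ
  rw [hφ] at h0
  have := hLbij.injOn (show x + y ∈ {x : F | x ^ q ^ k = x} from hz1) (show (0:F) ∈ {x : F | x ^ q ^ k = x} from h0) (by rw [hzL, hL0])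
  exact CharTwo.add_eq_zero.1 this
end

section
/- Let q be a power of 2 and k ≥ 1 an integer. Define L : F_{q^{3k}} → F_{q^{3k}} by L(x) = (x + S_{2k}(x)^{q^{2k}})^{4 q^{3k-1}}. Then L maps the subfield F_{q^k} bijectively onto itself, and L(x) + L(x)^{q^{2k}} = S_{2k}(x)^4 for all x ∈ F_{q^{3k}}. -/
/-- Let `q` be a power of 2 and `k ≥ 1`, and `L(x) = (x + S_{2k}(x)^{q^{2k}})^{4 q^{3k-1}}`.
Then `L` maps the subfield `F_{q^k}` bijectively onto itself, and
`L(x) + L(x)^{q^{2k}} = S_{2k}(x)^4` for all `x ∈ F_{q^{3k}}`. -/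
theorem stmt_2 (q e k : ℕ) (he : 0 < e) (hq : q = 2 ^ e) (hk : 0 < k)
    (F : Type*) [Field F] [Fintype F] (hF : Fintype.card F = q ^ (3 * k)) :
    Set.BijOn (fun x : F => (x + (S2k q k x) ^ q ^ (2 * k)) ^ (4 * q ^ (3 * k - 1)))
      {x : F | x ^ q ^ k = x} {x : F | x ^ q ^ k = x} ∧
    ∀ x : F,
      (x + (S2k q k x) ^ q ^ (2 * k)) ^ (4 * q ^ (3 * k - 1)) +
        ((x + (S2k q k x) ^ q ^ (2 * k)) ^ (4 * q ^ (3 * k - 1))) ^ q ^ (2 * k)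
      = (S2k q k x) ^ 4 := by
  have hcard : Fintype.card F = 2 ^ (e * (3 * k)) := by rw [hF, hq, ← pow_mul]
  have : Fact (Nat.Prime 2) := ⟨Nat.prime_two⟩
  have : CharP F 2 := charP_of_card_eq_prime_pow hcard
  have hadd : ∀ (n : ℕ) (a b : F), (a + b) ^ q ^ n = a ^ q ^ n + b ^ q ^ n := by
    intro n a b
    rw [hq, ← pow_mul]
    exact add_pow_char_pow a b _ _
  have hsum : ∀ (n m : ℕ) (f : ℕ → F),
      (∑ i ∈ Finset.range m, f i) ^ q ^ n = ∑ i ∈ Finset.range m, f i ^ q ^ n := by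
    intro n m f
    rw [hq, ← pow_mul]
    exact sum_pow_char_pow 2 _ _ _
  have hpp : ∀ (n m : ℕ) (a : F), (a ^ q ^ n) ^ q ^ m = a ^ q ^ (n + m) := by
    intro n m a
    rw [← pow_mul, ← pow_add]
  have hfix : ∀ a : F, a ^ q ^ (3 * k) = a := by
    intro a
    rw [← hF]; exact FiniteField.pow_card a
  have h2 : ∀ a : F, a + a = 0 := fun a => CharTwo.add_self_eq_zero a
  have hS : ∀ x : F, S2k q k x = (∑ i ∈ Finset.range k, x ^ q ^ i) +
      (∑ i ∈ Finset.range k, x ^ q ^ i) ^ q ^ k := by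
    intro x
    unfold S2k
    rw [two_mul, Finset.sum_range_add, hsum]
    congr 1
    apply Finset.sum_congr rfl
    intro i _
    rw [hpp, add_comm]
  have hSq : ∀ x : F, (S2k q k x) ^ q ^ 1 = S2k q k x + x + x ^ q ^ (2 * k) := by
    intro x
    have h1 := Finset.sum_range_succ (fun i => x ^ q ^ i) (2 * k)
    have h3 := Finset.sum_range_succ' (fun i => x ^ q ^ i) (2 * k)
    unfold S2k
    rw [hsum]
    simp only [hpp]
    simp only [pow_zero, pow_one] at h3
    rw [h1] at h3
    linear_combination -h3 - h2 x
  refine ⟨?_, ?_⟩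
  · have hL : ∀ x : F, x ^ q ^ k = x →
        (x + (S2k q k x) ^ q ^ (2 * k)) ^ (4 * q ^ (3 * k - 1)) =
          x ^ 2 ^ (2 + e * (3 * k - 1)) := by
      intro x hx
      have h0 : S2k q k x = 0 := by
        rw [hS, hsum]
        simp only [hpp]
        have : ∀ i, x ^ q ^ (i + k) = x ^ q ^ i := by
          intro i
          rw [add_comm, ← hpp, hx]
        simp only [this]
        exact h2 _
      have hq0 : q ^ (2 * k) ≠ 0 := by rw [hq]; positivity
      rw [h0, zero_pow hq0, add_zero, hq, ← pow_mul, pow_add]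
      norm_num
    have hmaps : Set.MapsTo
        (fun x : F => (x + (S2k q k x) ^ q ^ (2 * k)) ^ (4 * q ^ (3 * k - 1)))
        {x : F | x ^ q ^ k = x} {x : F | x ^ q ^ k = x} := by
      intro x hx
      simp only [Set.mem_ofPred_eq] at hx ⊢
      rw [hL x hx, ← pow_mul, mul_comm, pow_mul, hx]
    have hinj : Set.InjOn
        (fun x : F => (x + (S2k q k x) ^ q ^ (2 * k)) ^ (4 * q ^ (3 * k - 1)))
        {x : F | x ^ q ^ k = x} := by
      intro x hx y hy hxy
      simp only [Set.mem_ofPred_eq] at hx hy hxy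
      rw [hL x hx, hL y hy] at hxy
      exact iterateFrobenius_inj F 2 (2 + e * (3 * k - 1)) (by simpa [iterateFrobenius_def] using hxy)
    refine ⟨hmaps, hinj, ?_⟩
    have := Set.eq_of_subset_of_ncard_le hmaps.image_subset
      (Set.InjOn.ncard_image hinj).ge (Set.toFinite _)
    exact this.ge
  · intro x
    have key : (x + (S2k q k x) ^ q ^ (2 * k)) + (x + (S2k q k x) ^ q ^ (2 * k)) ^ q ^ (2 * k)
        = (S2k q k x) ^ q ^ 1 := by
      rw [hSq, hadd, hS]
      generalize (∑ i ∈ Finset.range k, x ^ q ^ i) = T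
      simp only [hadd, hpp]
      have e1 : T ^ q ^ (k + 2 * k) = T := by
        rw [show k + 2 * k = 3 * k by ring, hfix]
      have e2 : T ^ q ^ (2 * k + 2 * k) = T ^ q ^ k := by
        rw [show 2 * k + 2 * k = 3 * k + k by ring, ← hpp, hfix]
      have e3 : T ^ q ^ (k + (2 * k + 2 * k)) = T ^ q ^ (2 * k) := by
        rw [show k + (2 * k + 2 * k) = 3 * k + 2 * k by ring, ← hpp, hfix]
      simp only [add_assoc] at *
      rw [e1, e2, e3]
      linear_combination h2 (T ^ q ^ (2 * k))
    have hd : ∀ a b : F, (a + b) ^ (4 * q ^ (3 * k - 1)) =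
        a ^ (4 * q ^ (3 * k - 1)) + b ^ (4 * q ^ (3 * k - 1)) := by
      intro a b
      have : 4 * q ^ (3 * k - 1) = 2 ^ (2 + e * (3 * k - 1)) := by
        rw [hq, ← pow_mul, pow_add]; norm_num
      rw [this]
      exact add_pow_char_pow a b _ _
    rw [← pow_mul, mul_comm (4 * q ^ (3 * k - 1)) (q ^ (2 * k)), pow_mul _ (q ^ (2 * k)), ← hd, key,
      mul_comm 4, pow_mul, hpp, show 1 + (3 * k - 1) = 3 * k by omega, hfix]
end

section
/- Let q be a power of 2 and k ≥ 1 an integer. Then the map x ↦ (x + S_{2k}(x)^{q^{2k}})^{4 q^{3k-1}} + S_{2k}(x)^{q^k + 3} is a bijection of F_{q^{3k}}. -/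
theorem pow4_inj_aux {F : Type*} [Field F] [CharP F 2] {a b : F} (h : a ^ 4 = b ^ 4) : a = b := by
  have h2 : (2 : F) = 0 := CharTwo.two_eq_zero
  have : (a - b) ^ 4 = 0 := by
    linear_combination h + h2 * (-2 * a^3*b + 3 * a^2*b^2 - 2 * a*b^3 + b^4)
  exact sub_eq_zero.mp (pow_eq_zero_iff (by norm_num) |>.mp this)

theorem core_aux {F : Type*} [Field F] [CharP F 2] (σ : F →+* F) (h3 : ∀ x, σ (σ (σ x)) = x)
    (y z : F) (h : y ^ 4 + (y + σ (σ y)) ^ 3 * (y + σ y) = z ^ 4 + (z + σ (σ z)) ^ 3 * (z + σ z)) :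
    y = z := by
  have h2 : (2 : F) = 0 := CharTwo.two_eq_zero
  have key : ∀ y : F, y ^ 4 + (y + σ (σ y)) ^ 3 * (y + σ y) +
      σ (σ (y ^ 4 + (y + σ (σ y)) ^ 3 * (y + σ y))) =
      ((y + σ (σ y)) * (y + σ y) * (σ y + σ (σ y))) * (y + σ y) := by
    intro y
    simp only [map_add, map_mul, map_pow, h3]
    generalize σ (σ y) = c
    generalize σ y = b
    have e1 : c = (y + c) - y := by ring
    grind
  have hs : ∀ y : F, σ ((y + σ (σ y)) * (y + σ y) * (σ y + σ (σ y))) =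
      (y + σ (σ y)) * (y + σ y) * (σ y + σ (σ y)) := by
    intro y
    simp only [map_add, map_mul, h3]
    ring
  have hu0 : ((y + σ (σ y)) * (y + σ y) * (σ y + σ (σ y))) * (y + σ y) =
      ((z + σ (σ z)) * (z + σ z) * (σ z + σ (σ z))) * (z + σ z) := by
    rw [← key, ← key, h]
  have hu1 := congrArg σ hu0
  rw [map_mul σ _ (_ + _), hs, map_mul σ _ (_ + _), hs] at hu1
  have hu2 := congrArg σ hu1
  rw [map_mul σ _ (σ _), hs, map_mul σ _ (σ _), hs] at hu2
  simp only [map_add, h3] at hu1 hu2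
  have hN : (y + σ (σ y)) * (y + σ y) * (σ y + σ (σ y)) =
      (z + σ (σ z)) * (z + σ z) * (σ z + σ (σ z)) := by
    apply pow4_inj_aux
    have := congrArg₂ (· * ·) (congrArg₂ (· * ·) hu0 hu1) hu2
    linear_combination this
  have hz : ∀ y : F, (y + σ (σ y)) * (y + σ y) * (σ y + σ (σ y)) = 0 → y + σ y = 0 := by
    intro y hy
    rcases mul_eq_zero.mp hy with hy | hy
    · rcases mul_eq_zero.mp hy with hy | hy
      · have := congrArg σ hy
        simp only [map_add, h3, map_zero] at this
        rw [add_comm]; exact this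
      · exact hy
    · rw [← map_add] at hy
      exact (map_eq_zero σ).mp hy
  have hu : y + σ y = z + σ z := by
    by_cases h0 : (z + σ (σ z)) * (z + σ z) * (σ z + σ (σ z)) = 0
    · rw [hz z h0, hz y (hN.trans h0)]
    · rw [hN] at hu0
      exact mul_left_cancel₀ h0 hu0
  have hv : y + σ (σ y) = z + σ (σ z) := by
    have := congrArg (fun t => σ (σ t)) hu
    simp only [map_add, h3] at this
    rw [add_comm, this, add_comm]
  apply pow4_inj_aux
  rw [hu, hv] at h
  exact add_right_cancel h

/-- Let `q` be a power of 2 and `k ≥ 1`. Then the map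
`x ↦ (x + S_{2k}(x)^{q^{2k}})^{4 q^{3k-1}} + S_{2k}(x)^{q^k+3}`
is a bijection of `F_{q^{3k}}`. -/
theorem stmt_3 (q e k : ℕ) (he : 0 < e) (hq : q = 2 ^ e) (hk : 0 < k)
    (F : Type*) [Field F] [Fintype F] (hF : Fintype.card F = q ^ (3 * k)) :
    Function.Bijective (fun x : F =>
      (x + (S2k q k x) ^ q ^ (2 * k)) ^ (4 * q ^ (3 * k - 1)) +
        (S2k q k x) ^ (q ^ k + 3)) := by
  have : Fact (Nat.Prime 2) := ⟨Nat.prime_two⟩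
  have : CharP F 2 := by
    apply charP_of_card_eq_prime_pow (f := e * (3 * k))
    rw [hF, hq, ← pow_mul]
  have h2 : (2 : F) = 0 := CharTwo.two_eq_zero
  have hcard : ∀ x : F, x ^ q ^ (3 * k) = x := fun x => by rw [← hF]; exact FiniteField.pow_card x
  obtain ⟨φ, hφ⟩ : ∃ φ : F →+* F, ∀ x, φ x = x ^ q :=
    ⟨iterateFrobenius F 2 e, fun x => by rw [iterateFrobenius_def, hq]⟩
  obtain ⟨σ, hσ⟩ : ∃ σ : F →+* F, ∀ x, σ x = x ^ q ^ k :=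
    ⟨iterateFrobenius F 2 (e * k), fun x => by rw [iterateFrobenius_def, hq, pow_mul]⟩
  have hσσ : ∀ x, σ (σ x) = x ^ q ^ (2 * k) := fun x => by
    rw [hσ, hσ, ← pow_mul, ← pow_add, two_mul]
  have h3 : ∀ x, σ (σ (σ x)) = x := fun x => by
    rw [hσσ, hσ, ← pow_mul, ← pow_add, show k + 2 * k = 3 * k by ring, hcard]
  have hφσ : ∀ x, φ (σ x) = σ (φ x) := fun x => by rw [hφ, hφ, map_pow]
  have hS0 : ∀ x : F, S2k q k x + σ (S2k q k x) + σ (σ (S2k q k x)) = 0 := by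
    intro x
    have hA : S2k q k x = (∑ i ∈ Finset.range k, x ^ q ^ i) +
        σ (∑ i ∈ Finset.range k, x ^ q ^ i) := by
      rw [S2k, two_mul, Finset.sum_range_add, map_sum]
      congr 1
      apply Finset.sum_congr rfl
      intro i _
      rw [hσ, ← pow_mul, ← pow_add, add_comm]
    rw [hA]
    simp only [map_add, h3]
    generalize (∑ i ∈ Finset.range k, x ^ q ^ i) = A
    linear_combination h2 * (A + σ A + σ (σ A))
  have hS1 : ∀ x : F, φ (S2k q k x) = S2k q k x + x + σ (σ x) := by
    intro x
    have e1 := Finset.sum_range_succ (fun i => x ^ q ^ i) (2 * k)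
    have e2 := Finset.sum_range_succ' (fun i => x ^ q ^ i) (2 * k)
    have e3 : φ (S2k q k x) = ∑ i ∈ Finset.range (2 * k), x ^ q ^ (i + 1) := by
      rw [S2k, map_sum]
      apply Finset.sum_congr rfl
      intro i _
      rw [hφ, ← pow_mul, ← pow_succ]
    rw [e3, hσσ, S2k]
    simp only [pow_zero, pow_one] at e2
    linear_combination e1 - e2 - h2 * x
  have hy : ∀ x : F, φ (S2k q k x) =
      (x + σ (σ (S2k q k x))) + σ (σ (x + σ (σ (S2k q k x)))) := by
    intro x
    simp only [map_add, h3]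
    have h0 := hS0 x
    rw [hS1]
    linear_combination -h0 + h2 * S2k q k x
  have hG : ∀ x : F, φ ((x + (S2k q k x) ^ q ^ (2 * k)) ^ (4 * q ^ (3 * k - 1)) +
        (S2k q k x) ^ (q ^ k + 3)) = (x + σ (σ (S2k q k x))) ^ 4 +
      ((x + σ (σ (S2k q k x))) + σ (σ (x + σ (σ (S2k q k x))))) ^ 3 *
      ((x + σ (σ (S2k q k x))) + σ (x + σ (σ (S2k q k x)))) := by
    intro x
    have a1 : (x + σ (σ (S2k q k x))) + σ (x + σ (σ (S2k q k x))) = σ (φ (S2k q k x)) := by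
      rw [hy]; simp only [map_add, h3]; ring
    rw [a1, ← hy, ← hσσ, map_add]
    congr 1
    · rw [hφ, ← pow_mul, mul_assoc, ← pow_succ, show 3 * k - 1 + 1 = 3 * k by omega, pow_mul, hcard]
    · rw [pow_add, map_mul, ← hσ, hφσ, map_pow, mul_comm]
  refine Finite.injective_iff_bijective.mp ?_
  intro x z hxz
  have hxz' := congrArg φ hxz
  simp only [hG] at hxz'
  have hyz := core_aux σ h3 _ _ hxz'
  have hS : S2k q k x = S2k q k z := by
    apply φ.injective
    rw [hy, hy, hyz]
  rw [hS] at hyz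
  exact add_right_cancel hyz
end

section
/- Let q be a power of 2 and k ≥ 1 an integer. Then the set of zeros of S_{2k} in F_{q^{3k}} is exactly the subfield F_{q^k}; that is, {x ∈ F_{q^{3k}} : S_{2k}(x) = 0} = {x ∈ F_{q^{3k}} : x^{q^k} = x}. -/
/-- Let `q` be a power of 2 and `k ≥ 1`. Then the zero set of `S_{2k}` in `F_{q^{3k}}`
is exactly the subfield `F_{q^k} = {x : x^{q^k} = x}`. -/
theorem stmt_6 (q e k : ℕ) (he : 0 < e) (hq : q = 2 ^ e) (hk : 0 < k)
    (F : Type*) [Field F] [Fintype F] (hF : Fintype.card F = q ^ (3 * k)) :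
    {x : F | S2k q k x = 0} = {x : F | x ^ q ^ k = x} := by
  have hcard : Fintype.card F = 2 ^ (e * (3 * k)) := by rw [hF, hq, ← pow_mul]
  haveI : Fact (Nat.Prime 2) := ⟨Nat.prime_two⟩
  haveI : CharP F 2 := charP_of_card_eq_prime_pow hcard
  have h3 : ∀ x : F, x ^ q ^ (3 * k) = x := fun x => by rw [← hF]; exact FiniteField.pow_card x
  ext x
  simp only [Set.mem_setOf_eq, S2k]
  constructor
  · intro h
    have h1 : ∑ i ∈ Finset.range (2 * k), x ^ q ^ (i + 1) = 0 := by
      have h2 : (∑ i ∈ Finset.range (2 * k), x ^ q ^ i) ^ (2 ^ e) = 0 := by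
        rw [h]; exact zero_pow (by positivity)
      rw [sum_pow_char_pow, ← hq] at h2
      rw [← h2]
      exact Finset.sum_congr rfl fun i _ => by rw [← pow_mul, ← pow_succ]
    have h4 := Finset.sum_range_succ (fun i => x ^ q ^ i) (2 * k)
    rw [Finset.sum_range_succ', h, h1] at h4
    simp only [pow_zero, pow_one, zero_add] at h4
    calc x ^ q ^ k = (x ^ q ^ (2 * k)) ^ q ^ k := by rw [← h4]
      _ = x ^ q ^ (3 * k) := by rw [← pow_mul, ← pow_add]; congr 2; ring
      _ = x := h3 x
  · intro h
    rw [two_mul, Finset.sum_range_add]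
    have : ∀ i, x ^ q ^ (k + i) = x ^ q ^ i := fun i => by rw [pow_add, pow_mul, h]
    simp only [this]
    exact CharTwo.add_self_eq_zero _
end

section
/- Let q be a power of 2 and k ≥ 1 an integer. Then the image of the map S_{2k} : F_{q^{3k}} → F_{q^{3k}} is exactly the kernel of the relative trace Tr_{q^{3k}/q^k}; that is, {S_{2k}(x) : x ∈ F_{q^{3k}}} = {y ∈ F_{q^{3k}} : y + y^{q^k} + y^{q^{2k}} = 0}. -/
/-- Let `q` be a power of 2 and `k ≥ 1`. Then the image of `S_{2k}` on `F_{q^{3k}}` is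
exactly the kernel of the relative trace `Tr_{q^{3k}/q^k}(y) = y + y^{q^k} + y^{q^{2k}}`. -/
theorem stmt_7 (q e k : ℕ) (he : 0 < e) (hq : q = 2 ^ e) (hk : 0 < k)
    (F : Type*) [Field F] [Fintype F] (hF : Fintype.card F = q ^ (3 * k)) :
    Set.range (fun x : F => S2k q k x)
      = {y : F | y + y ^ q ^ k + y ^ q ^ (2 * k) = 0} := by
  have hcard : Fintype.card F = 2 ^ (e * (3 * k)) := by rw [hF, hq, ← pow_mul]
  have : Fact (Nat.Prime 2) := ⟨Nat.prime_two⟩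
  have : CharP F 2 := charP_of_card_eq_prime_pow hcard
  have hadd : ∀ (n : ℕ) (x y : F), (x + y) ^ q ^ n = x ^ q ^ n + y ^ q ^ n := by
    intro n x y
    rw [hq, ← pow_mul]
    exact add_pow_char_pow x y 2 (e * n)
  have hcomp : ∀ (m n : ℕ) (x : F), (x ^ q ^ m) ^ q ^ n = x ^ q ^ (m + n) := by
    intro m n x
    rw [← pow_mul, ← pow_add]
  have hid : ∀ x : F, x ^ q ^ (3 * k) = x := by
    intro x
    rw [← hF]; exact FiniteField.pow_card x
  have h2 : ∀ x : F, x + x = 0 := CharTwo.add_self_eq_zero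
  have htel : ∀ (z : F) (n : ℕ),
      ∑ i ∈ Finset.range n, (z + z ^ q ^ 1) ^ q ^ i = z + z ^ q ^ n := by
    intro z n
    induction n with
    | zero => simp [h2]
    | succ n ih =>
      rw [Finset.sum_range_succ, ih, hadd, hcomp, add_comm 1 n]
      linear_combination h2 (z ^ q ^ n)
  ext y
  simp only [Set.mem_range, Set.mem_ofPred_eq, S2k]
  constructor
  · rintro ⟨x, rfl⟩
    have hsum : ∀ n m : ℕ, (∑ i ∈ Finset.range n, x ^ q ^ i) ^ q ^ m
        = ∑ i ∈ Finset.range n, x ^ q ^ (m + i) := by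
      intro n m
      induction n with
      | zero =>
        have : q ^ m ≠ 0 := by rw [hq]; positivity
        rw [Finset.sum_range_zero, Finset.sum_range_zero, zero_pow this]
      | succ n ih => rw [Finset.sum_range_succ, hadd, ih, hcomp, Finset.sum_range_succ, add_comm n m]
    have hs : ∑ i ∈ Finset.range (2 * k), x ^ q ^ i = (∑ i ∈ Finset.range k, x ^ q ^ i)
        + (∑ i ∈ Finset.range k, x ^ q ^ i) ^ q ^ k := by
      rw [hsum, two_mul, Finset.sum_range_add]
    rw [hs]
    generalize (∑ i ∈ Finset.range k, x ^ q ^ i) = a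
    rw [hadd, hadd, hcomp, hcomp, show k + 2 * k = 3 * k by ring, hid, show k + k = 2 * k by ring]
    linear_combination h2 a + h2 (a ^ q ^ k) + h2 (a ^ q ^ (2 * k))
  · intro hy
    refine ⟨y ^ q ^ (2 * k) + (y ^ q ^ (2 * k)) ^ q ^ 1, ?_⟩
    rw [htel, hcomp, show 2 * k + 2 * k = 3 * k + k by ring, ← hcomp (3 * k) k, hid]
    linear_combination hy - h2 y
end

section
/- Let q = 4 and k ≥ 1 an integer, and let g(x) = x + S_{2k}(x)^{q^{2k}} + S_{2k}(x)^{q^k+3}. Then for every c ∈ F_{q^{3k}} and every x ∈ F_{q^{3k}}, Tr((c + c^{q^k}) · g(x)) = Tr(c · S_{2k}(x)^{1 + 2q^k + q^{2k}}), where Tr = Tr_{q^{3k}/2} is the absolute trace to F_2. -/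
/-- The absolute trace to `F_2` of a field with `2^m` elements:
`Tr(x) = x + x^2 + x^4 + ⋯ + x^{2^{m-1}}`. -/
def absTr (m : ℕ) {F : Type*} [Field F] (x : F) : F :=
  ∑ i ∈ Finset.range m, x ^ 2 ^ i

theorem aux_add {F : Type*} [Field F] [CharP F 2] (n : ℕ) (a b : F) :
    (a + b) ^ 4 ^ n = a ^ 4 ^ n + b ^ 4 ^ n := by
  have : Fact (Nat.Prime 2) := ⟨Nat.prime_two⟩
  have h : 4 ^ n = 2 ^ (2 * n) := by rw [pow_mul]; norm_num
  rw [h]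
  exact add_pow_char_pow a b _ _

theorem aux_absTr_add {F : Type*} [Field F] [CharP F 2] (m : ℕ) (a b : F) :
    absTr m (a + b) = absTr m a + absTr m b := by
  have : Fact (Nat.Prime 2) := ⟨Nat.prime_two⟩
  unfold absTr
  rw [← Finset.sum_add_distrib]
  exact Finset.sum_congr rfl fun i _ => add_pow_char_pow a b _ _

theorem aux_absTr_sq {F : Type*} [Field F] (m : ℕ) (a : F)
    (h : a ^ 2 ^ m = a) : absTr m (a ^ 2) = absTr m a := by
  unfold absTr
  have h1 := Finset.sum_range_succ (fun i => a ^ 2 ^ i) m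
  have h2 := Finset.sum_range_succ' (fun i => a ^ 2 ^ i) m
  rw [h1] at h2
  simp only [h, pow_zero, pow_one] at h2
  have h3 := add_right_cancel h2
  rw [h3]
  refine Finset.sum_congr rfl fun i _ => ?_
  rw [← pow_mul, pow_succ']

theorem aux_absTr_pow {F : Type*} [Field F] (m : ℕ)
    (h : ∀ a : F, a ^ 2 ^ m = a) (n : ℕ) (a : F) : absTr m (a ^ 2 ^ n) = absTr m a := by
  induction n with
  | zero => simp
  | succ n ih => rw [pow_succ, pow_mul, aux_absTr_sq m _ (h _), ih]

theorem aux_tele {F : Type*} [Field F] [CharP F 2] (x : F) (n : ℕ) :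
    (∑ i ∈ Finset.range n, x ^ 4 ^ i) ^ 4 + ∑ i ∈ Finset.range n, x ^ 4 ^ i = x ^ 4 ^ n + x := by
  induction n with
  | zero => simp [CharTwo.add_self_eq_zero]
  | succ n ih =>
    rw [Finset.sum_range_succ]
    have h := aux_add 1 (∑ i ∈ Finset.range n, x ^ 4 ^ i) (x ^ 4 ^ n)
    rw [pow_one] at h
    rw [h, pow_succ 4 n, pow_mul x]
    have h2 : (x ^ 4 ^ n) + x ^ 4 ^ n = 0 := CharTwo.add_self_eq_zero _
    linear_combination ih + h2

/-- For `q = 4`, `k ≥ 1` and `g(x) = x + S_{2k}(x)^{q^{2k}} + S_{2k}(x)^{q^k+3}`: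
for all `c, x ∈ F_{q^{3k}}`,
`Tr((c + c^{q^k})·g(x)) = Tr(c·S_{2k}(x)^{1+2q^k+q^{2k}})`,
where `Tr = Tr_{q^{3k}/2}` (note `4^{3k} = 2^{6k}`). -/
theorem stmt_8 (k : ℕ) (hk : 0 < k)
    (F : Type*) [Field F] [Fintype F] (hF : Fintype.card F = 4 ^ (3 * k))
    (c x : F) :
    absTr (6 * k) ((c + c ^ 4 ^ k) *
        (x + (S2k 4 k x) ^ 4 ^ (2 * k) + (S2k 4 k x) ^ (4 ^ k + 3)))
      = absTr (6 * k) (c * (S2k 4 k x) ^ (1 + 2 * 4 ^ k + 4 ^ (2 * k))) := by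
  have : Fact (Nat.Prime 2) := ⟨Nat.prime_two⟩
  have hc : Fintype.card F = 2 ^ (6 * k) := by
    rw [hF, show (4:ℕ) = 2 ^ 2 by norm_num, ← pow_mul]; congr 1; ring
  have : CharP F 2 := charP_of_card_eq_prime_pow hc
  have hfix : ∀ a : F, a ^ 2 ^ (6 * k) = a := fun a => by rw [← hc, FiniteField.pow_card]
  have h2 : (2 : F) = 0 := CharTwo.two_eq_zero
  have hcube : ∀ a : F, ((a ^ 4 ^ k) ^ 4 ^ k) ^ 4 ^ k = a := fun a => by
    rw [← pow_mul, ← pow_mul, ← pow_add, ← pow_add, show k + (k + k) = 3 * k by ring, ← hF,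
      FiniteField.pow_card]
  have h22 : ∀ a : F, a ^ 4 ^ (2 * k) = (a ^ 4 ^ k) ^ 4 ^ k := fun a => by
    rw [← pow_mul, ← pow_add, two_mul]
  have hTr : ∀ a : F, absTr (6 * k) (a ^ 4 ^ k) = absTr (6 * k) a := fun a => by
    rw [show 4 ^ k = 2 ^ (2 * k) by rw [pow_mul]; norm_num]
    exact aux_absTr_pow _ hfix _ _
  have htele := aux_tele x (2 * k)
  have hS : S2k 4 k x = (∑ i ∈ Finset.range k, x ^ 4 ^ i)
      + (∑ i ∈ Finset.range k, x ^ 4 ^ i) ^ 4 ^ k := by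
    unfold S2k
    rw [two_mul, Finset.sum_range_add]
    congr 1
    rw [show 4 ^ k = 2 ^ (2 * k) by rw [pow_mul]; norm_num, sum_pow_char_pow]
    refine Finset.sum_congr rfl fun i _ => ?_
    rw [show 2 ^ (2 * k) = 4 ^ k by rw [pow_mul]; norm_num, ← pow_mul, ← pow_add, add_comm]
  change (S2k 4 k x) ^ 4 + S2k 4 k x = _ at htele
  generalize (∑ i ∈ Finset.range k, x ^ 4 ^ i) = t at hS
  generalize S2k 4 k x = A at *
  have h0 : A + A ^ 4 ^ k + (A ^ 4 ^ k) ^ 4 ^ k = 0 := by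
    rw [hS]
    simp only [aux_add, hcube]
    linear_combination (t + t ^ 4 ^ k + (t ^ 4 ^ k) ^ 4 ^ k) * h2
  have hA := hcube A
  simp only [pow_add, h22] at htele ⊢
  simp only [pow_mul, pow_one]
  rw [add_mul, aux_absTr_add]
  have key : ∀ g : F, absTr (6 * k) (c ^ 4 ^ k * g)
      = absTr (6 * k) (c * (g ^ 4 ^ k) ^ 4 ^ k) := fun g => by
    rw [← hTr (c * _), mul_pow, hcube]
  rw [key, ← aux_absTr_add]
  congr 1
  rw [← mul_add]
  congr 1
  have hcomm : ∀ (a : F) (m n : ℕ), (a ^ m) ^ n = (a ^ n) ^ m := fun a m n => pow_right_comm a m n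
  simp only [aux_add, mul_pow, hcomm _ 3 (4 ^ k), hcomm _ 2 (4 ^ k), hA]
  generalize (A ^ 4 ^ k) ^ 4 ^ k = C at *
  generalize A ^ 4 ^ k = B at *
  generalize (x ^ 4 ^ k) ^ 4 ^ k = y at *
  have hC : C = A + B := by linear_combination h0 - (A + B) * h2
  have hy : y = A ^ 4 + A + x := by linear_combination -htele - x * h2
  subst hC hy
  linear_combination (x + A + B + A ^ 4 + 2 * A ^ 3 * B + A ^ 2 * B ^ 2) * h2
end

section
/- Let q be a power of 2 and k ≥ 1 an integer. Let L : F_{q^{3k}} → F_{q^{3k}} be an additive map satisfying L(x) + L(x)^{q^{2k}} = S_{2k}(x)^4 for all x ∈ F_{q^{3k}}, and set g(x) = L(x) + S_{2k}(x)^{q^k+3}. Then for every c ∈ F_{q^{3k}} and every x ∈ F_{q^{3k}}, Tr((c + c^{q^k}) · g(x)) = Tr(c · S_{2k}(x)^{1 + 2q^k + q^{2k}}), where Tr = Tr_{q^{3k}/2} is the absolute trace to F_2. -/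
lemma absTr_add' (m : ℕ) {F : Type*} [Field F] [CharP F 2] (x y : F) :
    absTr m (x + y) = absTr m x + absTr m y := by
  unfold absTr
  rw [← Finset.sum_add_distrib]
  exact Finset.sum_congr rfl fun i _ => add_pow_char_pow x y _ _

lemma absTr_sq' (m : ℕ) {F : Type*} [Field F] (x : F) (hx : x ^ 2 ^ m = x) :
    absTr m (x ^ 2) = absTr m x := by
  unfold absTr
  have h := Finset.sum_range_succ (fun i => x ^ 2 ^ i) m
  rw [Finset.sum_range_succ'] at h
  simp only [hx, pow_zero, pow_one] at h
  rw [← add_right_cancel h]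
  refine Finset.sum_congr rfl fun i _ => ?_
  rw [← pow_mul, pow_succ, mul_comm]

lemma absTr_pow' (m : ℕ) {F : Type*} [Field F] (hx : ∀ x : F, x ^ 2 ^ m = x) (n : ℕ) (x : F) :
    absTr m (x ^ 2 ^ n) = absTr m x := by
  induction n with
  | zero => simp
  | succ n ih => rw [pow_succ, pow_mul, absTr_sq' m _ (hx _), ih]

/-- Let `q = 2^e` and `k ≥ 1` (so `F_{q^{3k}}` has `2^{3ke}` elements). Let `L` be
additive with `L(x) + L(x)^{q^{2k}} = S_{2k}(x)^4` for all `x`, and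
`g(x) = L(x) + S_{2k}(x)^{q^k+3}`. Then for all `c, x ∈ F_{q^{3k}}`,
`Tr((c + c^{q^k})·g(x)) = Tr(c·S_{2k}(x)^{1+2q^k+q^{2k}})`, `Tr = Tr_{q^{3k}/2}`. -/
theorem stmt_9 (q e k : ℕ) (he : 0 < e) (hq : q = 2 ^ e) (hk : 0 < k)
    (F : Type*) [Field F] [Fintype F] (hF : Fintype.card F = q ^ (3 * k))
    (L : F → F) (hLadd : ∀ x y : F, L (x + y) = L x + L y)
    (hLid : ∀ x : F, L x + (L x) ^ q ^ (2 * k) = (S2k q k x) ^ 4)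
    (c x : F) :
    absTr (3 * k * e) ((c + c ^ q ^ k) * (L x + (S2k q k x) ^ (q ^ k + 3)))
      = absTr (3 * k * e) (c * (S2k q k x) ^ (1 + 2 * q ^ k + q ^ (2 * k))) := by
  have hcard : Fintype.card F = 2 ^ (3 * k * e) := by
    rw [hF, hq, ← pow_mul]; congr 1; ring
  have : Fact (Nat.Prime 2) := ⟨Nat.prime_two⟩
  have : CharP F 2 := charP_of_card_eq_prime_pow hcard
  have hfrob : ∀ y : F, y ^ 2 ^ (3 * k * e) = y := fun y => by
    rw [← hcard]; exact FiniteField.pow_card y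
  have hQ : q ^ k = 2 ^ (e * k) := by rw [hq, ← pow_mul]
  have hQ2 : q ^ (2 * k) = 2 ^ (e * (2 * k)) := by rw [hq, ← pow_mul]
  have h3 : ∀ y : F, (y ^ q ^ k) ^ q ^ (2 * k) = y := fun y => by
    rw [← pow_mul, ← pow_add, show k + 2 * k = 3 * k by ring, ← hF]
    exact FiniteField.pow_card y
  have hadd1 : ∀ y z : F, (y + z) ^ q ^ k = y ^ q ^ k + z ^ q ^ k := fun y z => by
    rw [hQ]; exact add_pow_char_pow y z _ _
  have hadd2 : ∀ y z : F, (y + z) ^ q ^ (2 * k) = y ^ q ^ (2 * k) + z ^ q ^ (2 * k) :=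
    fun y z => by rw [hQ2]; exact add_pow_char_pow y z _ _
  have htwo : ∀ y z : F, (y ^ q ^ k) ^ q ^ k = y ^ q ^ (2 * k) := fun y _ => by
    rw [← pow_mul, ← pow_add, two_mul]
  have h20 : (2 : F) = 0 := CharP.cast_eq_zero F 2
  have hL := hLid x
  -- relation between the conjugates
  have hrel : (S2k q k x) ^ q ^ (2 * k) = S2k q k x + (S2k q k x) ^ q ^ k := by
    set u : F := ∑ i ∈ Finset.range k, x ^ q ^ i with hu
    have hs : S2k q k x = u + u ^ q ^ k := by
      unfold S2k
      rw [two_mul, Finset.sum_range_add, hu]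
      congr 1
      rw [hQ, sum_pow_char_pow, ← hQ]
      refine Finset.sum_congr rfl fun i _ => ?_
      rw [← pow_mul, ← pow_add, add_comm]
    rw [hs, hadd2, hadd1, h3, htwo u u]
    linear_combination (-u ^ q ^ k) * h20
  have hbd := h3 (S2k q k x)
  generalize S2k q k x = a at *
  rw [add_mul, absTr_add']
  have e1 : absTr (3 * k * e) (c ^ q ^ k * (L x + a ^ (q ^ k + 3)))
      = absTr (3 * k * e) (c * (L x + a ^ (q ^ k + 3)) ^ q ^ (2 * k)) := by
    rw [← absTr_pow' _ hfrob (e * (2 * k)) (c ^ q ^ k * _), ← hQ2, mul_pow, h3]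
  rw [e1, ← absTr_add', ← mul_add]
  congr 2
  rw [hadd2]
  have e2 : (a ^ (q ^ k + 3)) ^ q ^ (2 * k) = a * (a ^ q ^ (2 * k)) ^ 3 := by
    rw [pow_add, mul_pow, hbd, ← pow_mul, ← pow_mul, mul_comm 3]
  rw [e2, pow_add, pow_add, pow_add, mul_comm 2 (q ^ k), pow_mul a (q ^ k) 2, hrel, pow_one]
  generalize a ^ q ^ k = b at *
  linear_combination hL + (a ^ 4 + 2 * a ^ 3 * b + a ^ 2 * b ^ 2) * h20
end

section
/- Let q be a power of 2 and k ≥ 1 an integer. Let T_0 = {x ∈ F_{q^{3k}} : x + x^{q^k} + x^{q^{2k}} = 0}, and let d_1, d_2 be a basis of T_0 over F_{q^k}. Then for every c ∈ F_{q^{3k}}, Σ_{x ∈ T_0} (−1)^{Tr(c · x^{1 + 2q^k + q^{2k}})} = (Σ_{x ∈ F_{q^k}} (−1)^{Tr(c · d_1^{q^k} · x)}) · (Σ_{y ∈ F_{q^k}} (−1)^{Tr(c · d_2^{q^k} · y)}), where Tr = Tr_{q^{3k}/2} is the absolute trace to F_2. -/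
/-- `(-1)^a` for `a ∈ F_2 ⊆ F`: `1` if `a = 0`, `-1` otherwise. -/
def chi {F : Type*} [Field F] [DecidableEq F] (a : F) : ℤ :=
  if a = 0 then 1 else -1

theorem sum_perm_aux {α : Type*} [DecidableEq α] (s : Finset α) (f : α → α) (h : α → ℤ)
    (hm : ∀ x ∈ s, f x ∈ s) (hi : ∀ x ∈ s, ∀ y ∈ s, f x = f y → x = y) :
    ∑ x ∈ s, h (f x) = ∑ x ∈ s, h x := by
  have hI : Set.InjOn f (s : Set α) := fun x hx y hy hxy => hi x hx y hy hxy
  have him : s.image f = s := by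
    apply Finset.eq_of_subset_of_card_le
    · intro y hy
      obtain ⟨x, hx, rfl⟩ := Finset.mem_image.1 hy
      exact hm x hx
    · rw [Finset.card_image_of_injOn hI]
  conv_rhs => rw [← him]
  rw [Finset.sum_image hI]

theorem chi_absTr_add (m : ℕ) {F : Type*} [Field F] [DecidableEq F] [CharP F 2]
    (hF : ∀ x : F, x ^ 2 ^ m = x) (x y : F) :
    chi (absTr m (x + y)) = chi (absTr m x) * chi (absTr m y) := by
  have hadd : absTr m (x + y) = absTr m x + absTr m y := by
    simp only [absTr, ← Finset.sum_add_distrib]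
    exact Finset.sum_congr rfl fun i _ => add_pow_char_pow x y 2 i
  have h01 : ∀ z : F, absTr m z = 0 ∨ absTr m z = 1 := by
    intro z
    have h2 : absTr m z ^ 2 = absTr m z := by
      have h1 : absTr m z ^ 2 = ∑ i ∈ Finset.range m, z ^ 2 ^ (i + 1) := by
        unfold absTr
        rw [sum_pow_char 2]
        exact Finset.sum_congr rfl fun i _ => by rw [pow_succ 2 i, pow_mul]
      have h3 := Finset.sum_range_succ (fun i => z ^ 2 ^ i) m
      rw [Finset.sum_range_succ', hF z] at h3
      simp only [pow_zero, pow_one] at h3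
      rw [h1]
      exact add_right_cancel h3
    have : absTr m z * (absTr m z - 1) = 0 := by linear_combination h2
    rcases mul_eq_zero.1 this with h | h
    · exact Or.inl h
    · exact Or.inr (sub_eq_zero.1 h)
  have h11 : (1 : F) + 1 = 0 := CharTwo.add_self_eq_zero 1
  rw [hadd]
  rcases h01 x with h | h <;> rcases h01 y with h' | h' <;> simp [chi, h, h', h11]

/-- Let `q = 2^e` be a power of 2, `k ≥ 1`, `T₀ = ker Tr_{q^{3k}/q^k}`, and `d₁, d₂` a
basis of `T₀` over `F_{q^k}`. Then for every `c ∈ F_{q^{3k}}`,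
`Σ_{x ∈ T₀} (−1)^{Tr(c·x^{1+2q^k+q^{2k}})}
  = (Σ_{x ∈ F_{q^k}} (−1)^{Tr(c·d₁^{q^k}·x)}) · (Σ_{y ∈ F_{q^k}} (−1)^{Tr(c·d₂^{q^k}·y)})`,
where `Tr = Tr_{q^{3k}/2}`. -/
theorem stmt_11 (q e k : ℕ) (he : 0 < e) (hq : q = 2 ^ e) (hk : 0 < k)
    (F : Type*) [Field F] [Fintype F] [DecidableEq F]
    (hF : Fintype.card F = q ^ (3 * k))
    (d₁ d₂ : F)
    (hd₁ : d₁ + d₁ ^ q ^ k + d₁ ^ q ^ (2 * k) = 0)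
    (hd₂ : d₂ + d₂ ^ q ^ k + d₂ ^ q ^ (2 * k) = 0)
    (hspan : ∀ t : F, t + t ^ q ^ k + t ^ q ^ (2 * k) = 0 →
      ∃ a b : F, a ^ q ^ k = a ∧ b ^ q ^ k = b ∧ t = a * d₁ + b * d₂)
    (hindep : ∀ a b : F, a ^ q ^ k = a → b ^ q ^ k = b →
      a * d₁ + b * d₂ = 0 → a = 0 ∧ b = 0)
    (c : F) :
    ∑ x ∈ Finset.univ.filter (fun x : F => x + x ^ q ^ k + x ^ q ^ (2 * k) = 0),
        chi (absTr (3 * k * e) (c * x ^ (1 + 2 * q ^ k + q ^ (2 * k))))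
      = (∑ x ∈ Finset.univ.filter (fun x : F => x ^ q ^ k = x),
            chi (absTr (3 * k * e) (c * d₁ ^ q ^ k * x))) *
        (∑ y ∈ Finset.univ.filter (fun y : F => y ^ q ^ k = y),
            chi (absTr (3 * k * e) (c * d₂ ^ q ^ k * y))) := by
  have hQ : q ^ k = 2 ^ (e * k) := by rw [hq, pow_mul]
  have hQ2 : q ^ (2 * k) = q ^ k * q ^ k := by rw [two_mul, pow_add]
  have hcard : Fintype.card F = 2 ^ (3 * k * e) := by
    rw [hF, hq, ← pow_mul]; congr 1; ring
  have hcard' : Fintype.card F = q ^ k * q ^ k * q ^ k := by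
    rw [hF, ← pow_add, ← pow_add]; congr 1; ring
  have : Fact (Nat.Prime 2) := ⟨Nat.prime_two⟩
  have : CharP F 2 := by
    exact charP_of_card_eq_prime_pow hcard
  have hfr : ∀ x : F, x ^ 2 ^ (3 * k * e) = x := fun x => by
    rw [← hcard]; exact FiniteField.pow_card x
  have hadd : ∀ x y : F, (x + y) ^ q ^ k = x ^ q ^ k + y ^ q ^ k := fun x y => by
    rw [hQ]; exact add_pow_char_pow x y _ _
  have hQ3 : ∀ x : F, ((x ^ q ^ k) ^ q ^ k) ^ q ^ k = x := fun x => by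
    rw [← pow_mul, ← pow_mul, ← mul_assoc, ← hcard']; exact FiniteField.pow_card x
  have hP2 : ∀ x : F, x ^ q ^ (2 * k) = (x ^ q ^ k) ^ q ^ k := fun x => by
    rw [hQ2, pow_mul]
  have hPe : ∀ x : F, x ^ (1 + 2 * q ^ k + q ^ (2 * k)) =
      x * (x ^ q ^ k) ^ 2 * (x ^ q ^ k) ^ q ^ k := fun x => by
    rw [pow_add, pow_add, hP2, pow_one, mul_comm 2, pow_mul]
  simp only [hPe]
  simp only [hP2] at hd₁ hd₂ hspan ⊢
  clear hPe hP2 hQ2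
  generalize q ^ k = Q at *
  have hfinj : ∀ x y : F, x ^ Q = y ^ Q → x = y := fun x y h => by
    rw [← hQ3 x, h, hQ3]
  have hz : (0 : F) ^ Q = 0 := by
    have := hadd 0 0
    simpa using this
  set T := Finset.univ.filter (fun x : F => x + x ^ Q + (x ^ Q) ^ Q = 0) with hT
  set K := Finset.univ.filter (fun x : F => x ^ Q = x) with hK
  have hmulT : ∀ a x : F, a ^ Q = a → x + x ^ Q + (x ^ Q) ^ Q = 0 →
      a * x + (a * x) ^ Q + ((a * x) ^ Q) ^ Q = 0 := by
    intro a x ha hx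
    simp only [mul_pow, ha]
    linear_combination a * hx
  have hfrT : ∀ x : F, x + x ^ Q + (x ^ Q) ^ Q = 0 →
      x ^ Q + (x ^ Q) ^ Q + ((x ^ Q) ^ Q) ^ Q = 0 := by
    intro x hx
    rw [hQ3]
    linear_combination hx
  have hN : ∀ x : F, (x * x ^ Q * (x ^ Q) ^ Q) ^ Q = x * x ^ Q * (x ^ Q) ^ Q := by
    intro x
    rw [mul_pow, mul_pow, hQ3]; ring
  have h1 : ∑ x ∈ T, chi (absTr (3 * k * e) (c * (x * (x ^ Q) ^ 2 * (x ^ Q) ^ Q)))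
      = ∑ x ∈ T, chi (absTr (3 * k * e) (c * x)) := by
    apply sum_perm_aux T (fun x => x * (x ^ Q) ^ 2 * (x ^ Q) ^ Q)
      (fun x => chi (absTr (3 * k * e) (c * x)))
    · intro x hx
      rw [hT, Finset.mem_filter] at hx ⊢
      refine ⟨Finset.mem_univ _, ?_⟩
      have := hmulT _ _ (hN x) (hfrT x hx.2)
      have he : x * (x ^ Q) ^ 2 * (x ^ Q) ^ Q = x * x ^ Q * (x ^ Q) ^ Q * x ^ Q := by ring
      simp only [he]
      exact this
    · intro x _ y _ hxy
      have hz' : ∀ z : F, z ≠ 0 → z ^ Q ≠ 0 := fun z hz0 h => hz0 (hfinj z 0 (by rw [h, hz]))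
      by_cases hx : x = 0
      · by_contra hne
        have hy : y ≠ 0 := fun h => hne (by rw [hx, h])
        have h1 := hz' y hy
        have h2 := hz' _ h1
        rw [hx] at hxy
        simp only [zero_mul] at hxy
        exact (mul_ne_zero (mul_ne_zero hy (pow_ne_zero 2 h1)) h2) hxy.symm
      have hxQ := hz' x hx
      have hxQQ := hz' _ hxQ
      have hNx : x * x ^ Q * (x ^ Q) ^ Q ≠ 0 := mul_ne_zero (mul_ne_zero hx hxQ) hxQQ
      obtain ⟨l, hl⟩ : ∃ l, l = (y * y ^ Q * (y ^ Q) ^ Q) / (x * x ^ Q * (x ^ Q) ^ Q) := ⟨_, rfl⟩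
      have hlQ : l ^ Q = l := by rw [hl, div_pow, hN, hN]
      have hl' : l * (x * x ^ Q * (x ^ Q) ^ Q) = y * y ^ Q * (y ^ Q) ^ Q := by
        rw [hl, div_mul_cancel₀ _ hNx]
      have hxl : x = l * y := by
        apply hfinj
        rw [mul_pow, hlQ]
        apply mul_right_cancel₀ hNx
        linear_combination hxy - y ^ Q * hl'
      have hy : y ≠ 0 := fun h => hx (by rw [hxl, h, mul_zero])
      have hyQ := hz' y hy
      have hyQQ := hz' _ hyQ
      have hNy : y * y ^ Q * (y ^ Q) ^ Q ≠ 0 := mul_ne_zero (mul_ne_zero hy hyQ) hyQQ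
      have hl4 : l ^ 4 = 1 := by
        rw [hxl] at hl'
        simp only [mul_pow, hlQ] at hl'
        apply mul_right_cancel₀ hNy
        linear_combination hl'
      have hl1 : l = 1 := by
        have h := sub_pow_char_pow (p := 2) (n := 2) l (1 : F)
        norm_num [hl4] at h
        exact sub_eq_zero.1 h
      rw [hxl, hl1, one_mul]
  have h2 : ∑ x ∈ T, chi (absTr (3 * k * e) (c * x))
      = ∑ x ∈ T, chi (absTr (3 * k * e) (c * x ^ Q)) := by
    symm
    apply sum_perm_aux T (fun x => x ^ Q) (fun x => chi (absTr (3 * k * e) (c * x)))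
    · intro x hx
      rw [hT, Finset.mem_filter] at hx ⊢
      exact ⟨Finset.mem_univ _, hfrT x hx.2⟩
    · intro x _ y _ hxy
      exact hfinj x y hxy
  rw [h1, h2, Finset.sum_mul_sum, ← Finset.sum_product']
  symm
  apply Finset.sum_bij (fun (p : F × F) _ => p.1 * d₁ + p.2 * d₂)
  · rintro ⟨a, b⟩ hp
    simp only [hK, Finset.mem_product, Finset.mem_filter, Finset.mem_univ, true_and] at hp
    simp only [hT, Finset.mem_filter, Finset.mem_univ, true_and, hadd]
    linear_combination hmulT a d₁ hp.1 hd₁ + hmulT b d₂ hp.2 hd₂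
  · rintro ⟨a, b⟩ hp ⟨a', b'⟩ hp' h
    simp only [hK, Finset.mem_product, Finset.mem_filter, Finset.mem_univ, true_and] at hp hp'
    simp only at h
    have hs : ∀ u v : F, u ^ Q = u → v ^ Q = v → (u - v) ^ Q = u - v := by
      intro u v hu hv
      rw [CharTwo.sub_eq_add, hadd, hu, hv]
    obtain ⟨h3, h4⟩ := hindep (a - a') (b - b') (hs _ _ hp.1 hp'.1) (hs _ _ hp.2 hp'.2)
      (by linear_combination h)
    rw [sub_eq_zero.1 h3, sub_eq_zero.1 h4]
  · intro t ht
    simp only [hT, Finset.mem_filter, Finset.mem_univ, true_and] at ht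
    obtain ⟨a, b, ha, hb, h⟩ := hspan t ht
    exact ⟨(a, b), by simp [hK, ha, hb], h.symm⟩
  · rintro ⟨a, b⟩ hp
    simp only [hK, Finset.mem_product, Finset.mem_filter, Finset.mem_univ, true_and] at hp
    rw [← chi_absTr_add _ hfr]
    congr 2
    simp only [hadd, mul_pow, hp.1, hp.2]
    ring
end

section
/- Let q be a power of 2 and k ≥ 1 an integer. Let T_0 = {x ∈ F_{q^{3k}} : x + x^{q^k} + x^{q^{2k}} = 0}. Then for every c ∈ F_{q^{3k}} with c ∉ F_{q^k}, Σ_{x ∈ T_0} (−1)^{Tr(c · x^{1 + 2q^k + q^{2k}})} = 0, where Tr = Tr_{q^{3k}/2} is the absolute trace to F_2. -/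
noncomputable def psi12 (K : Type*) [Field K] [Algebra (ZMod 2) K] (a : K) : ℤ :=
  if Algebra.trace (ZMod 2) K a = 0 then 1 else -1

lemma psi12_sum (K : Type*) [Field K] [Fintype K] [Algebra (ZMod 2) K] :
    ∑ t : K, psi12 K t = 0 := by
  obtain ⟨b, hb⟩ := Algebra.trace_surjective (ZMod 2) K 1
  have h1 : ∑ t : K, psi12 K (t + b) = ∑ t : K, psi12 K t :=
    Equiv.sum_comp (Equiv.addRight b) (psi12 K)
  have h2 : ∀ t : K, psi12 K (t + b) = - psi12 K t := by
    intro t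
    unfold psi12
    rw [map_add, hb]
    generalize Algebra.trace (ZMod 2) K t = u
    revert u; decide
  simp only [h2, Finset.sum_neg_distrib] at h1
  omega

lemma psi12_sum_mul (K : Type*) [Field K] [Fintype K] [Algebra (ZMod 2) K] (a : K)
    (ha : a ≠ 0) : ∑ t : K, psi12 K (t ^ 4 * a) = 0 := by
  haveI : CharP K 2 := charP_of_injective_algebraMap (algebraMap (ZMod 2) K).injective 2
  rw [← psi12_sum K]
  refine Function.Bijective.sum_comp (e := fun t : K => t ^ 4 * a) ?_ (psi12 K)
  refine Finite.injective_iff_bijective.mp ?_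
  intro s t h
  have h := mul_right_cancel₀ ha h
  have h' : iterateFrobenius K 2 2 s = iterateFrobenius K 2 2 t := by
    simpa [iterateFrobenius_def] using h
  exact (iterateFrobenius K 2 2).injective h'

lemma key12_surj (K F : Type*) [Field K] [Finite K] [Field F] [Finite F] [Algebra K F] (d : F)
    (hd : d ∉ Set.range (algebraMap K F)) (a : K) :
    ∃ x : F, Algebra.trace K F x = 0 ∧ Algebra.trace K F (d * x) = a := by
  have hne : ∃ x : F, Algebra.trace K F x = 0 ∧ Algebra.trace K F (d * x) ≠ 0 := by
    by_contra! hcon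
    obtain ⟨e, he⟩ := Algebra.trace_surjective K F 1
    apply hd
    refine ⟨Algebra.trace K F (d * e), ?_⟩
    have htr := (traceForm_nondegenerate K F).1
      (d - algebraMap K F (Algebra.trace K F (d * e)))
    simp_rw [Algebra.traceForm_apply] at htr
    refine (sub_eq_zero.mp (htr ?_)).symm
    intro x
    have h1 := hcon (x - Algebra.trace K F x • e) (by simp [he])
    rw [mul_sub, mul_smul_comm, map_sub, map_smul, smul_eq_mul] at h1
    rw [sub_mul, map_sub, ← Algebra.smul_def, map_smul, smul_eq_mul, mul_comm (Algebra.trace K F (d * e))]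
    exact h1
  obtain ⟨x, hx, hx'⟩ := hne
  refine ⟨(a / Algebra.trace K F (d * x)) • x, by simp [hx], ?_⟩
  rw [mul_smul_comm, map_smul, smul_eq_mul, div_mul_cancel₀ _ hx']

lemma key12_card (K F : Type*) [Field K] [Fintype K] [Field F] [Fintype F] [DecidableEq F]
    [DecidableEq K] [Algebra K F] (d : F)
    (hd : d ∉ Set.range (algebraMap K F)) :
    (Finset.univ.filter (fun x : F => Algebra.trace K F x = 0)).card =
    Fintype.card K * (Finset.univ.filter (fun x : F => Algebra.trace K F x = 0 ∧
      Algebra.trace K F (d * x) = 0)).card := by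
  rw [Finset.card_eq_sum_card_fiberwise (f := fun x => Algebra.trace K F (d * x))
    (t := Finset.univ) (by intro x _; simp)]
  rw [Finset.sum_const_nat (m := (Finset.univ.filter (fun x : F => Algebra.trace K F x = 0 ∧
      Algebra.trace K F (d * x) = 0)).card), Finset.card_univ]
  intro a _
  obtain ⟨y, hy, hy'⟩ := key12_surj K F d hd a
  refine Finset.card_bij' (fun x _ => x - y) (fun x _ => x + y) ?_ ?_ ?_ ?_
  · intro x hx
    simp only [Finset.mem_filter, Finset.mem_univ, true_and] at hx ⊢
    simp [mul_sub, hx.1, hx.2, hy, hy']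
  · intro x hx
    simp only [Finset.mem_filter, Finset.mem_univ, true_and] at hx ⊢
    simp [mul_add, hx.1, hx.2, hy, hy']
  · simp
  · simp

lemma key12_main (K F : Type*) [Field K] [Fintype K] [Field F] [Fintype F] [DecidableEq F]
    [DecidableEq K] [Algebra K F] [Algebra (ZMod 2) K] (h3 : Module.finrank K F = 3) (d : F)
    (hd : d ∉ Set.range (algebraMap K F)) :
    ∑ x ∈ Finset.univ.filter (fun x : F => Algebra.trace K F x = 0),
      psi12 K (Algebra.norm K x * Algebra.trace K F (d * x)) = 0 := by
  set T := Finset.univ.filter (fun x : F => Algebra.trace K F x = 0) with hT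
  set S := ∑ x ∈ T, psi12 K (Algebra.norm K x * Algebra.trace K F (d * x)) with hS
  have hsc : ∀ t : K, t ≠ 0 →
      ∑ x ∈ T, psi12 K (t ^ 4 * (Algebra.norm K x * Algebra.trace K F (d * x))) = S := by
    intro t ht
    refine Finset.sum_bij' (fun x _ => t • x) (fun x _ => t⁻¹ • x) ?_ ?_ ?_ ?_ ?_
    · intro x hx
      simp only [hT, Finset.mem_filter, Finset.mem_univ, true_and] at hx ⊢
      simp [hx]
    · intro x hx
      simp only [hT, Finset.mem_filter, Finset.mem_univ, true_and] at hx ⊢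
      simp [hx]
    · intro x _; simp [smul_smul, ht]
    · intro x _; simp [smul_smul, ht]
    · intro x _
      have e1 : Algebra.trace K F (d * t • x) = t * Algebra.trace K F (d * x) := by
        rw [mul_smul_comm, map_smul, smul_eq_mul]
      have e2 : Algebra.norm K (t • x) = t ^ 3 * Algebra.norm K x := by
        rw [Algebra.smul_def, map_mul, Algebra.norm_algebraMap, h3]
      rw [e1, e2]
      congr 1; ring
  have hz : ∑ x ∈ T, psi12 K ((0:K) ^ 4 * (Algebra.norm K x * Algebra.trace K F (d * x)))
      = T.card := by
    simp [psi12]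
  have hA : ∑ t : K, ∑ x ∈ T, psi12 K (t ^ 4 * (Algebra.norm K x * Algebra.trace K F (d * x)))
      = T.card + ((Fintype.card K : ℤ) - 1) * S := by
    rw [← Finset.add_sum_erase _ _ (Finset.mem_univ (0:K)), hz,
      Finset.sum_congr rfl (fun t ht => hsc t (Finset.ne_of_mem_erase ht)), Finset.sum_const,
      Finset.card_erase_of_mem (Finset.mem_univ _), Finset.card_univ, nsmul_eq_mul,
      Nat.cast_sub Fintype.card_pos, Nat.cast_one]
  have hB : ∑ t : K, ∑ x ∈ T, psi12 K (t ^ 4 * (Algebra.norm K x * Algebra.trace K F (d * x)))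
      = Fintype.card K * (Finset.univ.filter (fun x : F => Algebra.trace K F x = 0 ∧
      Algebra.trace K F (d * x) = 0)).card := by
    rw [Finset.sum_comm, ← Finset.filter_filter, ← hT, Finset.card_filter, Nat.cast_sum,
      Finset.mul_sum]
    refine Finset.sum_congr rfl fun x _ => ?_
    by_cases h : Algebra.trace K F (d * x) = 0
    · simp [h, psi12]
    · rw [if_neg h, Nat.cast_zero, mul_zero]
      apply psi12_sum_mul
      refine mul_ne_zero ?_ h
      rw [Algebra.norm_ne_zero_iff]
      rintro rfl
      simp at h
  have hC := key12_card K F d hd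
  rw [← hT] at hC
  have hC' : (T.card : ℤ) = Fintype.card K * (Finset.univ.filter (fun x : F =>
    Algebra.trace K F x = 0 ∧ Algebra.trace K F (d * x) = 0)).card := by exact_mod_cast hC
  rw [hA, ← hC'] at hB
  have hK : (1 : ℤ) < Fintype.card K := by exact_mod_cast Fintype.one_lt_card
  have : ((Fintype.card K : ℤ) - 1) * S = 0 := by linarith
  rcases mul_eq_zero.mp this with h | h
  · omega
  · exact h

/-- Let `q = 2^e` be a power of 2, `k ≥ 1`, and `T₀ = ker Tr_{q^{3k}/q^k}`.
Then for every `c ∈ F_{q^{3k}} \ F_{q^k}`,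
`Σ_{x ∈ T₀} (−1)^{Tr(c·x^{1+2q^k+q^{2k}})} = 0`, where `Tr = Tr_{q^{3k}/2}`. -/
theorem stmt_12 (q e k : ℕ) (he : 0 < e) (hq : q = 2 ^ e) (hk : 0 < k)
    (F : Type*) [Field F] [Fintype F] [DecidableEq F]
    (hF : Fintype.card F = q ^ (3 * k))
    (c : F) (hc : ¬ c ^ q ^ k = c) :
    ∑ x ∈ Finset.univ.filter (fun x : F => x + x ^ q ^ k + x ^ q ^ (2 * k) = 0),
        chi (absTr (3 * k * e) (c * x ^ (1 + 2 * q ^ k + q ^ (2 * k)))) = 0 := by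
  classical
  have hek : k * e ≠ 0 := by positivity
  have hF2 : Fintype.card F = 2 ^ (3 * k * e) := by rw [hF, hq, ← pow_mul]; ring_nf
  haveI : CharP F 2 := by
    obtain ⟨p, hp⟩ := CharP.exists F
    obtain ⟨n, hpp, hn⟩ := FiniteField.card F p
    rw [hF2] at hn
    have : p ∣ 2 := hpp.dvd_of_dvd_pow (hn ▸ dvd_pow_self p n.ne_zero)
    have : p = 2 := (Nat.prime_dvd_prime_iff_eq hpp Nat.prime_two).mp this
    exact this ▸ hp
  letI : Algebra (ZMod 2) F := ZMod.algebra F 2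
  let K := GaloisField 2 (k * e)
  letI : Fintype K := Fintype.ofFinite K
  have hcK : Nat.card K = q ^ k := by
    rw [GaloisField.card 2 (k * e) hek, hq, ← pow_mul, mul_comm]
  have hfr : Module.finrank (ZMod 2) F = 3 * k * e := by
    have h := Module.card_eq_pow_finrank (K := ZMod 2) (V := F)
    rw [hF2, ZMod.card] at h
    exact (Nat.pow_right_injective le_rfl h).symm
  have hfK : Module.finrank (ZMod 2) K = k * e := GaloisField.finrank 2 hek
  obtain ⟨φ⟩ : Nonempty (K →ₐ[ZMod 2] F) := FiniteField.nonempty_algHom_of_finrank_dvd (by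
    rw [hfr, hfK, mul_assoc]; exact dvd_mul_left _ _)
  letI : Algebra K F := φ.toRingHom.toAlgebra
  haveI : IsScalarTower (ZMod 2) K F := IsScalarTower.of_algebraMap_eq (fun x => (φ.commutes x).symm)
  have h3 : Module.finrank K F = 3 := by
    have h := Module.finrank_mul_finrank (ZMod 2) K F
    rw [hfr, hfK] at h
    have : k * e * Module.finrank K F = k * e * 3 := by rw [h]; ring
    exact Nat.eq_of_mul_eq_mul_left (Nat.pos_of_ne_zero hek) this
  set Q := q ^ k with hQ
  have hQ2 : q ^ (2 * k) = Q ^ 2 := by rw [hQ, ← pow_mul, mul_comm]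
  have hQ3 : ∀ x : F, x ^ Q ^ 3 = x := by
    intro x
    have h := FiniteField.pow_card x
    rwa [hF, mul_comm, pow_mul] at h
  have htr : ∀ x : F, algebraMap K F (Algebra.trace K F x) = x + x ^ Q + x ^ Q ^ 2 := by
    intro x
    rw [FiniteField.algebraMap_trace_eq_sum_pow, h3, hcK]
    simp [Finset.sum_range_succ]
  have hno : ∀ x : F, algebraMap K F (Algebra.norm K x) = x * x ^ Q * x ^ Q ^ 2 := by
    intro x
    rw [FiniteField.algebraMap_norm_eq_prod_pow, h3, hcK]
    simp [Finset.prod_range_succ]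
  have hinj := (algebraMap K F).injective
  have hrange : ∀ a : K, (algebraMap K F a) ^ Q = algebraMap K F a := by
    intro a
    rw [← map_pow, ← hcK, Nat.card_eq_fintype_card, FiniteField.pow_card]
  have hdQ : (c ^ Q ^ 2) ^ Q = c := by
    rw [← pow_mul, ← pow_succ]; exact hQ3 c
  have hd : c ^ Q ^ 2 ∉ Set.range (algebraMap K F) := by
    rintro ⟨a, ha⟩
    have h := hrange a
    rw [ha, hdQ] at h
    apply hc
    exact (congrArg (· ^ Q) h).trans hdQ
  rw [← key12_main K F h3 (c ^ Q ^ 2) hd]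
  refine Finset.sum_congr ?_ ?_
  · ext x
    simp only [Finset.mem_filter, Finset.mem_univ, true_and]
    rw [hQ2, ← htr, map_eq_zero_iff _ hinj]
  · intro x _
    have hA : ∀ y : F, absTr (3 * k * e) y = algebraMap (ZMod 2) F (Algebra.trace (ZMod 2) F y) := by
      intro y
      rw [FiniteField.algebraMap_trace_eq_sum_pow, hfr, Nat.card_zmod, absTr]
    have hT : Algebra.trace K F (c * x ^ Q) = Algebra.trace K F (c ^ Q ^ 2 * x) := by
      apply hinj
      have : c * x ^ Q = (c ^ Q ^ 2 * x) ^ Q := by rw [mul_pow, hdQ]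
      rw [this, htr, htr]
      generalize c ^ Q ^ 2 * x = w
      have h1 : (w ^ Q) ^ Q = w ^ Q ^ 2 := by rw [← pow_mul, pow_two]
      have h2 : (w ^ Q) ^ Q ^ 2 = w := by rw [← pow_mul, ← pow_succ']; exact hQ3 w
      rw [h1, h2]; ring
    have hE : c * x ^ (1 + 2 * Q + q ^ (2 * k)) = Algebra.norm K x • (c * x ^ Q) := by
      rw [Algebra.smul_def, hno, hQ2]; ring
    rw [hA, hE, ← Algebra.trace_trace (S := K), map_smul, hT, smul_eq_mul]
    unfold chi psi12
    simp only [map_eq_zero_iff _ (algebraMap (ZMod 2) F).injective]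
end

section
/- Let q = 4 and k ≥ 1 an integer, and let g(x) = x + S_{2k}(x)^{q^{2k}} + S_{2k}(x)^{q^k+3}. Then for every nonzero a ∈ F_{q^{3k}}, Σ_{x ∈ F_{q^{3k}}} (−1)^{Tr(a · g(x))} = 0, where Tr = Tr_{q^{3k}/2} is the absolute trace to F_2. -/
section aux
variable {F : Type*} [Field F]

lemma aux_pow4 [CharP F 2] (n : ℕ) (x y : F) : (x + y) ^ 4 ^ n = x ^ 4 ^ n + y ^ 4 ^ n := by
  have h : (4:ℕ) ^ n = 2 ^ (2 * n) := by rw [pow_mul]; norm_num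
  rw [h]; exact add_pow_char_pow x y 2 _

lemma aux_pow4_inj [CharP F 2] (n : ℕ) {x y : F} (h : x ^ 4 ^ n = y ^ 4 ^ n) : x = y := by
  have h1 : (x + y) ^ 4 ^ n = 0 := by rw [aux_pow4, h]; exact CharTwo.add_self_eq_zero _
  exact CharTwo.add_eq_zero.mp (pow_eq_zero_iff (by positivity) |>.mp h1)

lemma aux_sum4 [CharP F 2] (n m : ℕ) (x : F) :
    (∑ i ∈ Finset.range m, x ^ 4 ^ i) ^ 4 ^ n = ∑ i ∈ Finset.range m, x ^ 4 ^ (n + i) := by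
  induction m with
  | zero => simp
  | succ m ih =>
    rw [Finset.sum_range_succ, aux_pow4, ih, Finset.sum_range_succ, ← pow_mul, ← pow_add,
      add_comm m n]

lemma aux_tel [CharP F 2] (m : ℕ) (x : F) :
    (∑ i ∈ Finset.range m, x ^ 4 ^ i) ^ 4 + (∑ i ∈ Finset.range m, x ^ 4 ^ i)
      = x ^ 4 ^ m + x := by
  induction m with
  | zero => simp [CharTwo.add_self_eq_zero]
  | succ m ih =>
    have h := aux_pow4 1 (∑ i ∈ Finset.range m, x ^ 4 ^ i) (x ^ 4 ^ m)
    rw [pow_one] at h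
    rw [Finset.sum_range_succ, h, ← pow_mul, ← pow_succ]
    have h2 : x ^ 4 ^ m + x ^ 4 ^ m = 0 := CharTwo.add_self_eq_zero _
    linear_combination ih + h2

lemma aux_S [CharP F 2] (k : ℕ) (hc : ∀ x : F, x ^ 4 ^ (3 * k) = x) (x : F) :
    (S2k 4 k x) ^ 4 ^ (2 * k) = S2k 4 k x + (S2k 4 k x) ^ 4 ^ k := by
  have hA : S2k 4 k x = (∑ i ∈ Finset.range k, x ^ 4 ^ i)
      + (∑ i ∈ Finset.range k, x ^ 4 ^ i) ^ 4 ^ k := by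
    rw [aux_sum4, S2k, two_mul, Finset.sum_range_add]
  set A := ∑ i ∈ Finset.range k, x ^ 4 ^ i
  rw [hA, aux_pow4, aux_pow4, ← pow_mul, ← pow_mul, ← pow_add, ← pow_add,
    show k + 2 * k = 3 * k by ring, hc, ← two_mul]
  have h2 : A ^ 4 ^ k + A ^ 4 ^ k = 0 := CharTwo.add_self_eq_zero _
  linear_combination -h2

lemma aux_D [CharP F 2] (k : ℕ) (hc : ∀ x : F, x ^ 4 ^ (3 * k) = x) (x : F) :
    let y := S2k 4 k x
    let z := y ^ 4 ^ k
    let G := x + y ^ 4 ^ (2 * k) + y ^ (4 ^ k + 3)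
    z ^ 4 ^ k = y + z ∧ (y + z) ^ 4 ^ k = y ∧ G = x + (y + z) + z * y ^ 3 ∧
      G + G ^ 4 ^ (2 * k) = y * z ^ 2 * (y + z) := by
  intro y z G
  have hS : y ^ 4 ^ (2 * k) = y + z := aux_S k hc x
  have h1 : z ^ 4 ^ k = y + z := by
    rw [← hS, ← pow_mul, ← pow_add, two_mul]
  have h2 : (y + z) ^ 4 ^ k = y := by
    rw [aux_pow4, h1]
    have := CharTwo.add_self_eq_zero z
    change z + (y + z) = y
    linear_combination this
  have h3 : G = x + (y + z) + z * y ^ 3 := by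
    change x + y ^ 4 ^ (2 * k) + y ^ (4 ^ k + 3) = _
    rw [hS, pow_add]
  refine ⟨h1, h2, h3, ?_⟩
  have hz : z ^ 4 ^ (2 * k) = y := by
    rw [two_mul, pow_add, pow_mul, h1, h2]
  have ht : y ^ 4 + y = x ^ 4 ^ (2 * k) + x := aux_tel (2 * k) x
  rw [h3, aux_pow4, aux_pow4, aux_pow4, mul_pow, hz, ← pow_mul y 3, mul_comm 3, pow_mul y _ 3, hS]
  have two : (2 : F) = 0 := CharTwo.two_eq_zero
  linear_combination (-1 : F) * ht + (y ^ 4 + 2 * y + z + 2 * y ^ 3 * z + y ^ 2 * z ^ 2) * two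

lemma aux_inj [CharP F 2] (k : ℕ) (hc : ∀ x : F, x ^ 4 ^ (3 * k) = x) :
    Function.Injective (fun x : F => x + (S2k 4 k x) ^ 4 ^ (2 * k) + (S2k 4 k x) ^ (4 ^ k + 3)) := by
  intro x x' h
  obtain ⟨h1, h2, h3, h4⟩ := aux_D k hc x
  obtain ⟨h1', h2', h3', h4'⟩ := aux_D k hc x'
  simp only at h h1 h2 h3 h4 h1' h2' h3' h4'
  rw [h, h4'] at h4
  rw [h] at h3
  have h5 := h3.symm.trans h3'
  clear h3 h3' h4' h
  suffices hy : S2k 4 k x = S2k 4 k x' by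
    rw [hy] at h5
    simpa using h5
  clear h5
  generalize S2k 4 k x = y at *
  generalize S2k 4 k x' = y' at *
  have hz : y ^ 4 ^ k = 0 → y = 0 := fun h => pow_eq_zero_iff (by positivity) |>.mp h
  have hz' : y' ^ 4 ^ k = 0 → y' = 0 := fun h => pow_eq_zero_iff (by positivity) |>.mp h
  have hD := congrArg (· ^ 4 ^ k) h4
  have e : ∀ w : F, (w ^ 4 ^ k) ^ 2 = (w ^ 2) ^ 4 ^ k := fun w => by
    rw [← pow_mul, ← pow_mul, mul_comm]
  simp only [mul_pow] at hD
  rw [← e (y ^ 4 ^ k), ← e (y' ^ 4 ^ k), h1, h1', h2, h2'] at hD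
  have hD2 := congrArg (· ^ 4 ^ k) hD
  simp only [mul_pow] at hD2
  rw [← e (y + _), ← e (y' + _), h1, h1', h2, h2'] at hD2
  have inj : ∀ {u v : F}, u ^ 4 ^ k = v ^ 4 ^ k → u = v := fun h => aux_pow4_inj k h
  suffices y ^ 4 ^ k = y' ^ 4 ^ k from inj this
  have hs : y + y ^ 4 ^ k = 0 → y = 0 := fun h => by
    rw [h] at h2; rw [← h2]; exact zero_pow (by positivity)
  have hs' : y' + y' ^ 4 ^ k = 0 → y' = 0 := fun h => by
    rw [h] at h2'; rw [← h2']; exact zero_pow (by positivity)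
  have hz0 : y = 0 → y ^ 4 ^ k = 0 := fun h => by rw [h]; exact zero_pow (by positivity)
  have hz0' : y' = 0 → y' ^ 4 ^ k = 0 := fun h => by rw [h]; exact zero_pow (by positivity)
  generalize y ^ 4 ^ k = z at *
  generalize y' ^ 4 ^ k = z' at *
  have hN : y * z * (y + z) = y' * z' * (y' + z') := by
    apply aux_pow4_inj 1
    rw [pow_one]
    calc _ = (y * z ^ 2 * (y + z)) * (z * (y + z) ^ 2 * y) * ((y + z) * y ^ 2 * z) := by ring
      _ = (y' * z' ^ 2 * (y' + z')) * (z' * (y' + z') ^ 2 * y') * ((y' + z') * y' ^ 2 * z') := by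
        rw [← h4, hD, hD2]
      _ = _ := by ring
  by_cases h0 : y * z * (y + z) = 0
  · have hy0 : y = 0 := by
      rcases mul_eq_zero.mp h0 with h | h
      · rcases mul_eq_zero.mp h with h | h
        · exact h
        · exact hz h
      · exact hs h
    have hy0' : y' = 0 := by
      rcases mul_eq_zero.mp (hN ▸ h0) with h | h
      · rcases mul_eq_zero.mp h with h | h
        · exact h
        · exact hz' h
      · exact hs' h
    rw [hz0 hy0, hz0' hy0']
  · apply mul_left_cancel₀ h0
    calc _ = y * z ^ 2 * (y + z) := by ring
      _ = y' * z' ^ 2 * (y' + z') := h4.symm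
      _ = (y' * z' * (y' + z')) * z' := by ring
      _ = _ := by rw [hN]

lemma aux_abs_add [CharP F 2] (m : ℕ) (x y : F) : absTr m (x + y) = absTr m x + absTr m y := by
  simp only [absTr, ← Finset.sum_add_distrib]
  exact Finset.sum_congr rfl fun i _ => add_pow_char_pow x y 2 i

lemma aux_abs_sq [CharP F 2] (m : ℕ) (x : F) : absTr m x ^ 2 + absTr m x = x ^ 2 ^ m + x := by
  induction m with
  | zero => simp [absTr, CharTwo.add_self_eq_zero]
  | succ m ih =>
    simp only [absTr] at *
    rw [Finset.sum_range_succ, CharTwo.add_sq, ← pow_mul, ← pow_succ]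
    have h2 : x ^ 2 ^ m + x ^ 2 ^ m = 0 := CharTwo.add_self_eq_zero _
    linear_combination ih + h2

lemma aux_abs_ne [Fintype F] (m : ℕ) (hm : 0 < m) (hF : Fintype.card F = 2 ^ m) :
    ∃ z : F, absTr m z ≠ 0 := by
  by_contra! hcon
  obtain ⟨n, rfl⟩ : ∃ n, m = n + 1 := ⟨m - 1, by omega⟩
  let p : Polynomial F := ∑ i ∈ Finset.range (n + 1), Polynomial.X ^ 2 ^ i
  have hdeg : p.natDegree < Fintype.card F := by
    refine lt_of_le_of_lt (Polynomial.natDegree_sum_le_of_forall_le (n := 2 ^ n) _ _ ?_) ?_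
    · intro i hi
      rw [Polynomial.natDegree_X_pow]
      exact Nat.pow_le_pow_right (by norm_num) (by simpa [Nat.lt_succ_iff] using hi)
    · rw [hF]; exact Nat.pow_lt_pow_right (by norm_num) (by omega)
  have hp : p = 0 := by
    apply Polynomial.eq_zero_of_natDegree_lt_card_of_eval_eq_zero p (f := (id : F → F))
      Function.injective_id _ hdeg
    intro z
    have := hcon z
    simpa [p, absTr, Polynomial.eval_finsetSum] using this
  have hco : p.coeff 1 = 1 := by
    simp only [p, Polynomial.finsetSum_coeff, Polynomial.coeff_X_pow]
    rw [Finset.sum_eq_single 0]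
    · simp
    · intro b _ hb
      rw [if_neg]
      exact (Nat.one_lt_two_pow hb).ne
    · simp
  rw [hp] at hco
  simp at hco

lemma aux_sum [CharP F 2] [Fintype F] [DecidableEq F] (m : ℕ) (hm : 0 < m)
    (hF : Fintype.card F = 2 ^ m) : ∑ z : F, chi (absTr m z) = 0 := by
  obtain ⟨z0, hz0⟩ := aux_abs_ne m hm hF
  have h01 : ∀ z : F, absTr m z = 0 ∨ absTr m z = 1 := fun z => by
    have h := aux_abs_sq m z
    rw [← hF, FiniteField.pow_card, CharTwo.add_self_eq_zero] at h
    have h' : absTr m z * (absTr m z + 1) = 0 := by linear_combination h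
    rcases mul_eq_zero.mp h' with h | h
    · exact Or.inl h
    · exact Or.inr (CharTwo.add_eq_zero.mp h)
  have h1 : absTr m z0 = 1 := (h01 z0).resolve_left hz0
  have hneg : ∀ z : F, chi (absTr m (z + z0)) = - chi (absTr m z) := fun z => by
    rw [aux_abs_add, h1]
    rcases h01 z with h | h <;> rw [h] <;> simp [chi, CharTwo.add_self_eq_zero]
  have := Equiv.sum_comp (Equiv.addRight z0) (fun z : F => chi (absTr m z))
  simp only [Equiv.coe_addRight, hneg, Finset.sum_neg_distrib] at this
  omega

end aux


/-- For `q = 4`, `k ≥ 1` and `g(x) = x + S_{2k}(x)^{q^{2k}} + S_{2k}(x)^{q^k+3}`: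
for every nonzero `a ∈ F_{q^{3k}}`, `Σ_{x ∈ F_{q^{3k}}} (−1)^{Tr(a·g(x))} = 0`,
where `Tr = Tr_{q^{3k}/2}` (note `4^{3k} = 2^{6k}`). -/
theorem stmt_14 (k : ℕ) (hk : 0 < k)
    (F : Type*) [Field F] [Fintype F] [DecidableEq F]
    (hF : Fintype.card F = 4 ^ (3 * k))
    (a : F) (ha : a ≠ 0) :
    ∑ x : F, chi (absTr (6 * k)
        (a * (x + (S2k 4 k x) ^ 4 ^ (2 * k) + (S2k 4 k x) ^ (4 ^ k + 3)))) = 0 := by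
  have hc : ∀ x : F, x ^ 4 ^ (3 * k) = x := fun x => by
    rw [← hF]; exact FiniteField.pow_card x
  have hF2 : Fintype.card F = 2 ^ (6 * k) := by
    rw [hF, show (4:ℕ) = 2 ^ 2 by norm_num, ← pow_mul]; congr 1; ring
  have hchar : CharP F 2 := by
    have : Fact (Nat.Prime 2) := ⟨Nat.prime_two⟩
    exact charP_of_card_eq_prime_pow hF2
  have hinj : Function.Injective (fun x : F =>
      a * (x + (S2k 4 k x) ^ 4 ^ (2 * k) + (S2k 4 k x) ^ (4 ^ k + 3))) :=
    (mul_right_injective₀ ha).comp (aux_inj k hc)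
  have hb := Finite.injective_iff_bijective.mp hinj
  rw [← aux_sum (F := F) (6 * k) (by omega) hF2]
  exact Function.Bijective.sum_comp hb (fun z => chi (absTr (6 * k) z))
end

section
/- Let q be a power of 2 and k ≥ 1 an integer. Let c ∈ F_{q^{3k}} with c ∉ F_{q^k}, and let g : F_{q^{3k}} → F_{q^{3k}} be any function such that Tr(c·(g(x)+g(x)^{q^{2k}})) = Tr(c·S_{2k}(x)^{1+2q^k+q^{2k}}) for all x (as established for g(x) = L(x) + S_{2k}(x)^{q^k+3} with L additive and L + L^{q^{2k}} = S_{2k}^4). Then Σ_{x ∈ F_{q^{3k}}} (−1)^{Tr(c·S_{2k}(x)^{1+2q^k+q^{2k}})} = q^k · Σ_{u ∈ T_0} (−1)^{Tr(c·u^{1+2q^k+q^{2k}})}, where T_0 = {u ∈ F_{q^{3k}} : u + u^{q^k} + u^{q^{2k}} = 0} and Tr = Tr_{q^{3k}/2}. -/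
theorem aux_card_le {F : Type*} [Field F] [Fintype F] [DecidableEq F] (p : Polynomial F) (n : ℕ)
    (hp : p ≠ 0) (hn : p.natDegree ≤ n) (s : Finset F) (hs : ∀ x ∈ s, p.eval x = 0) :
    s.card ≤ n := by
  refine le_trans ?_ ((Polynomial.card_roots' p).trans hn)
  refine le_trans (Finset.card_le_card ?_) (Multiset.toFinset_card_le p.roots)
  intro x hx
  simp [hp, hs x hx]

theorem aux_card_ker {F : Type*} [Field F] [Fintype F] [DecidableEq F] (Q : ℕ) (hQ : 1 < Q) :
    (Finset.univ.filter (fun x : F => x ^ Q = x)).card ≤ Q := by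
  open Polynomial in
  refine aux_card_le (X ^ Q - X) Q (FiniteField.X_pow_card_sub_X_ne_zero F hQ)
    (FiniteField.X_pow_card_sub_X_natDegree_eq F hQ).le _ ?_
  intro x hx
  have := (Finset.mem_filter.1 hx).2
  simp [this]

theorem aux_card_T {F : Type*} [Field F] [Fintype F] [DecidableEq F] (Q R : ℕ) (hQ : 1 < Q)
    (hR : Q < R) :
    (Finset.univ.filter (fun x : F => x + x ^ Q + x ^ R = 0)).card ≤ R := by
  open Polynomial in
  have hd : (X + X ^ Q + X ^ R : F[X]).natDegree = R := by
    rw [natDegree_add_eq_right_of_natDegree_lt]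
    · simp
    · refine lt_of_le_of_lt (natDegree_add_le _ _) ?_
      simp; omega
  refine aux_card_le _ R (fun h => ?_) hd.le _ ?_
  · rw [h] at hd; simp at hd; omega
  intro x hx
  have := (Finset.mem_filter.1 hx).2
  simp [this]

theorem aux_main (q e k : ℕ) (he : 0 < e) (hq : q = 2 ^ e) (hk : 0 < k)
    (F : Type*) [Field F] [Fintype F] [DecidableEq F]
    (hF : Fintype.card F = q ^ (3 * k)) (f : F → ℤ) :
    ∑ x : F, f (S2k q k x) = (q ^ k : ℤ) *
        ∑ u ∈ Finset.univ.filter (fun u : F => u + u ^ q ^ k + u ^ q ^ (2 * k) = 0), f u := by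
  have hF2 : Fintype.card F = 2 ^ (e * (3 * k)) := by rw [hF, hq, ← pow_mul]
  have : Fact (Nat.Prime 2) := ⟨Nat.prime_two⟩
  have : CharP F 2 := charP_of_card_eq_prime_pow hF2
  have hadd : ∀ (i : ℕ) (x y : F), (x + y) ^ q ^ i = x ^ q ^ i + y ^ q ^ i := by
    intro i x y
    rw [hq, ← pow_mul, add_pow_char_pow]
  have hpp : ∀ (i j : ℕ) (x : F), (x ^ q ^ i) ^ q ^ j = x ^ q ^ (i + j) := by
    intro i j x
    rw [← pow_mul, ← pow_add]
  have h3 : ∀ x : F, x ^ q ^ (3 * k) = x := fun x => by rw [← hF, FiniteField.pow_card]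
  have h4 : ∀ x : F, x ^ q ^ (4 * k) = x ^ q ^ k := fun x => by
    rw [show 4 * k = 3 * k + k by ring, ← hpp, h3]
  have hS : ∀ x y : F, S2k q k (x + y) = S2k q k x + S2k q k y := by
    intro x y
    simp only [S2k, hadd, Finset.sum_add_distrib]
  have hSn : ∀ (n : ℕ) (x : F), ∑ i ∈ Finset.range n, (x + x ^ q) ^ q ^ i = x + x ^ q ^ n := by
    intro n x
    induction n with
    | zero => simp [CharTwo.add_self_eq_zero]
    | succ n ih =>
      rw [Finset.sum_range_succ, ih, hadd]
      have := hpp 1 n x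
      rw [pow_one, add_comm 1 n] at this
      rw [this]
      linear_combination CharTwo.add_self_eq_zero (x ^ q ^ n)
  have hSt : ∀ x : F, S2k q k (x + x ^ q) = x + x ^ q ^ (2 * k) := fun x => hSn _ x
  have hsumq : ∀ (j n : ℕ) (x : F), (∑ i ∈ Finset.range n, x ^ q ^ i) ^ q ^ j
      = ∑ i ∈ Finset.range n, x ^ q ^ (i + j) := by
    intro j n x
    induction n with
    | zero =>
      have : q ^ j ≠ 0 := by rw [hq]; positivity
      rw [Finset.sum_range_zero, Finset.sum_range_zero, zero_pow this]
    | succ n ih => rw [Finset.sum_range_succ, hadd, ih, Finset.sum_range_succ, hpp]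
  have hSA : ∀ x : F, S2k q k x = (∑ i ∈ Finset.range k, x ^ q ^ i)
      + (∑ i ∈ Finset.range k, x ^ q ^ i) ^ q ^ k := by
    intro x
    rw [hsumq, S2k, two_mul, Finset.sum_range_add]
    simp only [add_comm]
  have hT : ∀ x : F, S2k q k x + (S2k q k x) ^ q ^ k + (S2k q k x) ^ q ^ (2 * k) = 0 := by
    intro x
    rw [hSA]
    generalize (∑ i ∈ Finset.range k, x ^ q ^ i) = A
    rw [hadd, hadd, hpp, hpp, show k + k = 2 * k by ring, show k + 2 * k = 3 * k by ring, h3]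
    linear_combination CharTwo.add_self_eq_zero (A + A ^ q ^ k + A ^ q ^ (2 * k))
  have hSsq : ∀ x : F, S2k q k (x ^ q) = (S2k q k x) ^ q := by
    intro x
    have := hsumq 1 (2 * k) x
    rw [pow_one] at this
    rw [S2k, S2k, this]
    refine Finset.sum_congr rfl fun i _ => ?_
    rw [← pow_mul, pow_succ, mul_comm]
  have hq0 : q ≠ 0 := by rw [hq]; positivity
  have hker : ∀ x : F, S2k q k x = 0 ↔ x ^ q ^ k = x := by
    intro x
    constructor
    · intro h
      have h1 := hSt x
      rw [hS, hSsq, h, zero_pow hq0, add_zero] at h1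
      have h2 : x ^ q ^ (2 * k) = x := by
        linear_combination -h1 - CharTwo.add_self_eq_zero x
      have h5 := h3 x
      rw [show 3 * k = 2 * k + k by ring, ← hpp, h2] at h5
      exact h5
    · intro h
      rw [hSA, hsumq]
      have : ∀ i, x ^ q ^ (i + k) = x ^ q ^ i := fun i => by
        rw [add_comm, ← hpp, h]
      simp only [this]
      exact CharTwo.add_self_eq_zero _
  have hsurj : ∀ u : F, u + u ^ q ^ k + u ^ q ^ (2 * k) = 0 → ∃ x, S2k q k x = u := by
    intro u hu
    refine ⟨u ^ q ^ (2 * k) + (u ^ q ^ (2 * k)) ^ q, ?_⟩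
    rw [hSt, hpp, show 2 * k + 2 * k = 4 * k by ring, h4]
    linear_combination hu - CharTwo.add_self_eq_zero u
  set T := Finset.univ.filter (fun u : F => u + u ^ q ^ k + u ^ q ^ (2 * k) = 0) with hTdef
  set K := Finset.univ.filter (fun x : F => x ^ q ^ k = x) with hKdef
  have hmaps : ∀ x ∈ (Finset.univ : Finset F), S2k q k x ∈ T := by
    intro x _
    simp [hTdef, hT]
  have hfib : ∀ u ∈ T, (Finset.univ.filter (fun x : F => S2k q k x = u)).card = K.card := by
    intro u hu
    obtain ⟨y, hy⟩ := hsurj u (Finset.mem_filter.1 hu).2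
    refine Finset.card_bij (fun x _ => x + y) ?_ ?_ ?_
    · intro x hx
      have := (Finset.mem_filter.1 hx).2
      refine Finset.mem_filter.2 ⟨Finset.mem_univ _, (hker _).1 ?_⟩
      rw [hS, this, hy, CharTwo.add_self_eq_zero]
    · intro a _ b _ h
      exact add_right_cancel h
    · intro b hb
      have := (hker b).2 (Finset.mem_filter.1 hb).2
      refine ⟨b + y, Finset.mem_filter.2 ⟨Finset.mem_univ _, ?_⟩, ?_⟩
      · rw [hS, this, hy, zero_add]
      · rw [add_assoc, CharTwo.add_self_eq_zero, add_zero]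
  have hcard : T.card * K.card = q ^ (3 * k) := by
    rw [← hF, ← Finset.card_univ, Finset.card_eq_sum_card_fiberwise hmaps,
      Finset.sum_congr rfl hfib, Finset.sum_const, smul_eq_mul]
  have hq1 : 1 < q := by rw [hq]; exact Nat.one_lt_two_pow he.ne'
  have hQ1 : 1 < q ^ k := Nat.one_lt_pow hk.ne' hq1
  have hK1 : K.card ≤ q ^ k := aux_card_ker _ hQ1
  have hT1 : T.card ≤ q ^ (2 * k) :=
    aux_card_T _ _ hQ1 (Nat.pow_lt_pow_right hq1 (by omega))
  have hKc : K.card = q ^ k := by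
    refine le_antisymm hK1 ?_
    have hpos : 0 < q ^ (2 * k) := by positivity
    refine Nat.le_of_mul_le_mul_left ?_ hpos
    calc q ^ (2 * k) * q ^ k = T.card * K.card := by rw [hcard, ← pow_add]; congr 1; ring
      _ ≤ _ := Nat.mul_le_mul_right _ hT1
  rw [← Finset.sum_fiberwise_of_maps_to hmaps, Finset.mul_sum]
  refine Finset.sum_congr rfl fun u hu => ?_
  rw [Finset.sum_congr rfl (g := fun _ => f u)
    (fun x hx => by rw [(Finset.mem_filter.1 hx).2]), Finset.sum_const, hfib u hu, hKc]
  simp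

/-- Let `q = 2^e` be a power of 2, `k ≥ 1`, `c ∈ F_{q^{3k}} \ F_{q^k}`, and let
`g : F_{q^{3k}} → F_{q^{3k}}` satisfy
`Tr(c·(g(x) + g(x)^{q^{2k}})) = Tr(c·S_{2k}(x)^{1+2q^k+q^{2k}})` for all `x`. Then
`Σ_{x ∈ F_{q^{3k}}} (−1)^{Tr(c·S_{2k}(x)^{1+2q^k+q^{2k}})}
   = q^k · Σ_{u ∈ T₀} (−1)^{Tr(c·u^{1+2q^k+q^{2k}})}`,
where `T₀ = {u : u + u^{q^k} + u^{q^{2k}} = 0}` and `Tr = Tr_{q^{3k}/2}`. -/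
theorem stmt_16 (q e k : ℕ) (he : 0 < e) (hq : q = 2 ^ e) (hk : 0 < k)
    (F : Type*) [Field F] [Fintype F] [DecidableEq F]
    (hF : Fintype.card F = q ^ (3 * k))
    (c : F) (hc : ¬ c ^ q ^ k = c)
    (g : F → F)
    (hg : ∀ x : F, absTr (3 * k * e) (c * (g x + (g x) ^ q ^ (2 * k)))
      = absTr (3 * k * e) (c * (S2k q k x) ^ (1 + 2 * q ^ k + q ^ (2 * k)))) :
    ∑ x : F, chi (absTr (3 * k * e) (c * (S2k q k x) ^ (1 + 2 * q ^ k + q ^ (2 * k))))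
      = (q ^ k : ℤ) *
        ∑ u ∈ Finset.univ.filter (fun u : F => u + u ^ q ^ k + u ^ q ^ (2 * k) = 0),
          chi (absTr (3 * k * e) (c * u ^ (1 + 2 * q ^ k + q ^ (2 * k)))) := by
  exact aux_main q e k he hq hk F hF
    (fun u => chi (absTr (3 * k * e) (c * u ^ (1 + 2 * q ^ k + q ^ (2 * k)))))
end
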